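/- Let m be a non-negative integer and let x > 0 be real with x not an integer. Then ∑_{n=1}^∞ σ_{2m+1/2}(n) n^{−1/2} e^{−2π√(2nx)} cos(2π√(2nx)) = ζ(1/2−2m)/(2π√(2x)) + π√(2x)·ζ(−1/2−2m) + ζ(1/2)·ζ(−2m) + ((−1)^m/(π√x·(2π)^{2m+1/2}))·Γ(2m+1/2) ∑_{n=1}^∞ σ_{2m+1/2}(n) n^{−2m−1/2} · W_m(n,x), where W_m(n,x) denotes the convergent series ₃F₂(1/4, 3/4, 1; 1/4−m, 3/4−m; −n²/x²) when n < x, and denotes its analytic continuation 1 − ₃F₂(1/4+m, 3/4+m, 1; 1/4, 3/4; −x²/n²) (a convergent series since x < n) when n > x. -/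

import Mathlib

section

open Complex Finset
open scoped Real BigOperators Classical

/-- Generalized divisor sum `σ_r(n) = ∑_{d ∣ n} d^r` with real exponent. -/
noncomputable def rsigma (r : ℝ) (n : ℕ) : ℝ := ∑ d ∈ n.divisors, (d : ℝ) ^ r

/-- Rising factorial `(a)_k`. -/
noncomputable def poch (a : ℂ) (k : ℕ) : ℂ := ∏ i ∈ Finset.range k, (a + i)

/-- Generalized hypergeometric series `₃F₂`. -/
noncomputable def F32 (a₁ a₂ a₃ b₁ b₂ z : ℂ) : ℂ :=
  ∑' k : ℕ, poch a₁ k * poch a₂ k * poch a₃ k /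
    (poch b₁ k * poch b₂ k * (k.factorial : ℂ)) * z ^ k

/-- `W_m(n,x)`: the series `₃F₂(1/4,3/4,1;1/4−m,3/4−m;−n²/x²)` for `n < x`, and its
analytic continuation `1 − ₃F₂(1/4+m,3/4+m,1;1/4,3/4;−x²/n²)` for `n > x`. -/
noncomputable def Wm (m : ℕ) (n : ℕ) (x : ℝ) : ℂ :=
  if (n : ℝ) < x then
    F32 (1 / 4) (3 / 4) 1 (1 / 4 - (m : ℂ)) (3 / 4 - (m : ℂ)) (-(n : ℂ) ^ 2 / (x : ℂ) ^ 2)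
  else
    1 - F32 (1 / 4 + (m : ℂ)) (3 / 4 + (m : ℂ)) 1 (1 / 4) (3 / 4) (-(x : ℂ) ^ 2 / (n : ℂ) ^ 2)

end

namespace CC
open Filter Topology Set

lemma hasDerivAt_cpow_real (r : ℂ) {t : ℝ} (ht : 0 < t) :
    HasDerivAt (fun y : ℝ => (y : ℂ) ^ r) (r * (t : ℂ) ^ (r - 1)) t := by
  have h := ((hasDerivAt_id (t : ℂ)).cpow_const (c := r)
    (Or.inl (by simpa using ht))).comp_ofReal
  simpa using h

noncomputable def zT (k : ℕ) (s : ℂ) : ℂ :=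
  (s - 1) * (k + 1 : ℂ) ^ (-s) + (k + 2 : ℂ) ^ (1 - s) - (k + 1 : ℂ) ^ (1 - s)

lemma zT_bound (k : ℕ) (s : ℂ) (hs : 0 < s.re) :
    ‖zT k s‖ ≤ ‖1 - s‖ * (‖s‖ * ((k : ℝ) + 1) ^ (-s.re - 1)) := by
  have hk : (0 : ℝ) < (k : ℝ) + 1 := by positivity
  have h1 : ∀ t ∈ Icc ((k : ℝ) + 1) (k + 2),
      ‖(t : ℂ) ^ (-s) - ((k : ℝ) + 1 : ℝ) ^ (-s)‖ ≤ ‖s‖ * ((k : ℝ) + 1) ^ (-s.re - 1) := by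
    intro t ht
    have := Convex.norm_image_sub_le_of_norm_hasDerivWithin_le (𝕜 := ℝ)
      (f := fun y : ℝ => (y : ℂ) ^ (-s)) (f' := fun y : ℝ => (-s) * (y : ℂ) ^ (-s - 1))
      (s := Icc ((k : ℝ) + 1) (k + 2)) (x := (k : ℝ) + 1) (y := t)
      (C := ‖s‖ * ((k : ℝ) + 1) ^ (-s.re - 1))
      (fun y hy => (hasDerivAt_cpow_real (-s) (hk.trans_le hy.1)).hasDerivWithinAt)
      (fun y hy => by
        have hy0 := hk.trans_le hy.1
        rw [norm_mul, norm_neg, Complex.norm_cpow_eq_rpow_re_of_pos hy0]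
        simp only [Complex.sub_re, Complex.neg_re, Complex.one_re]
        exact mul_le_mul_of_nonneg_left (Real.rpow_le_rpow_of_nonpos hk hy.1 (by linarith))
          (norm_nonneg _))
      (convex_Icc _ _) ⟨le_rfl, by linarith⟩ ht
    refine this.trans ?_
    have : ‖t - ((k : ℝ) + 1)‖ ≤ 1 := by
      rw [Real.norm_eq_abs, abs_le]; constructor <;> linarith [ht.1, ht.2]
    exact mul_le_of_le_one_right (by positivity) this
  have := Convex.norm_image_sub_le_of_norm_hasDerivWithin_le (𝕜 := ℝ)
      (f := fun y : ℝ => (y : ℂ) ^ (1 - s) + (s - 1) * (((k : ℝ) + 1 : ℝ) : ℂ) ^ (-s) * (y : ℂ))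
      (f' := fun y : ℝ => (1 - s) * (y : ℂ) ^ (1 - s - 1) + (s - 1) * (((k : ℝ) + 1 : ℝ) : ℂ) ^ (-s))
      (s := Icc ((k : ℝ) + 1) (k + 2)) (x := (k : ℝ) + 1) (y := (k : ℝ) + 2)
      (C := ‖1 - s‖ * (‖s‖ * ((k : ℝ) + 1) ^ (-s.re - 1)))
      (fun y hy => by
        refine HasDerivAt.hasDerivWithinAt ?_
        refine (hasDerivAt_cpow_real (1 - s) (hk.trans_le hy.1)).add ?_
        simpa using ((hasDerivAt_id (y : ℂ)).comp_ofReal).const_mul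
          ((s - 1) * (((k : ℝ) + 1 : ℝ) : ℂ) ^ (-s)))
      (fun y hy => by
        have : (1 - s) * (y : ℂ) ^ (1 - s - 1) + (s - 1) * (((k : ℝ) + 1 : ℝ) : ℂ) ^ (-s)
          = (1 - s) * ((y : ℂ) ^ (-s) - (((k : ℝ) + 1 : ℝ) : ℂ) ^ (-s)) := by
          rw [show 1 - s - 1 = -s by ring]; ring
        rw [this, norm_mul]
        gcongr
        exact h1 y hy)
      (convex_Icc _ _) ⟨le_rfl, by linarith⟩ ⟨by linarith, le_rfl⟩
  have e : ‖(k : ℝ) + 2 - ((k : ℝ) + 1)‖ = 1 := by norm_num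
  rw [e, mul_one] at this
  refine le_of_eq_of_le (congrArg norm ?_) this
  unfold zT; push_cast; ring

lemma zT_summable (s : ℂ) (hs : 0 < s.re) : Summable (fun k => zT k s) := by
  have h : Summable (fun k : ℕ => ((k : ℝ) + 1) ^ (-s.re - 1)) := by
    have := (summable_nat_add_iff 1).2 (Real.summable_nat_rpow.2 (show -s.re - 1 < -1 by linarith))
    simpa using this
  exact Summable.of_norm_bounded ((h.mul_left ‖s‖).mul_left ‖1 - s‖) fun k => zT_bound k s hs

lemma zT_sum (k : ℕ) (s : ℂ) : ∑ i ∈ Finset.range k, zT i s =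
    (s - 1) * ∑ i ∈ Finset.range k, (i + 1 : ℂ) ^ (-s) + (k + 1 : ℂ) ^ (1 - s) - 1 := by
  induction k with
  | zero => simp
  | succ n ih =>
    rw [Finset.sum_range_succ, Finset.sum_range_succ, ih]
    simp only [zT]; push_cast
    rw [show (n : ℂ) + 1 + 1 = n + 2 by ring]; ring

lemma zT_tsum_big (s : ℂ) (hs : 1 < s.re) : ∑' k, zT k s = riemannZeta₁ s - 1 := by
  have h1 := (zT_summable s (by linarith)).hasSum.tendsto_sum_nat
  have hz := (Complex.summable_one_div_nat_cpow (p := s)).2 hs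
  have hz' : Summable (fun i : ℕ => (i + 1 : ℂ) ^ (-s)) := by
    have := (summable_nat_add_iff 1).2 hz
    simpa [Complex.cpow_neg] using this
  have h2 := hz'.hasSum.tendsto_sum_nat
  have hzeta : ∑' i : ℕ, (i + 1 : ℂ) ^ (-s) = riemannZeta s := by
    rw [zeta_eq_tsum_one_div_nat_add_one_cpow hs]; simp [Complex.cpow_neg]
  have h3 : Tendsto (fun k : ℕ => (k + 1 : ℂ) ^ (1 - s)) atTop (𝓝 0) := by
    rw [tendsto_zero_iff_norm_tendsto_zero]
    have : ∀ k : ℕ, ‖(k + 1 : ℂ) ^ (1 - s)‖ = ((k + 1 : ℕ) : ℝ) ^ (-(s.re - 1)) := by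
      intro k
      have := Complex.norm_cpow_eq_rpow_re_of_pos (x := (k : ℝ) + 1) (by positivity) (1 - s)
      push_cast at this ⊢
      rw [this]; simp
    simp_rw [this]
    exact (tendsto_rpow_neg_atTop (by linarith)).comp
      (tendsto_natCast_atTop_atTop.comp (tendsto_add_atTop_nat 1))
  have hne : s ≠ 1 := by rintro rfl; simp at hs
  have h4 : Tendsto (fun k : ℕ => ∑ i ∈ Finset.range k, zT i s) atTop
      (𝓝 ((s - 1) * riemannZeta s + 0 - 1)) := by
    simp_rw [zT_sum]
    rw [← hzeta]
    exact ((h2.const_mul _).add h3).sub_const 1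
  rw [tendsto_nhds_unique h1 h4, riemannZeta_eq_inv_sub_mul hne]
  have : s - 1 ≠ 0 := sub_ne_zero.2 hne
  field_simp; ring

lemma zT_tsum_half : ∑' k, zT k (1 / 2) = riemannZeta₁ (1 / 2) - 1 := by
  let U : Set ℂ := {s : ℂ | 1 / 4 < s.re} ∩ Metric.ball 0 3
  have hUo : IsOpen U := (isOpen_lt continuous_const Complex.continuous_re).inter Metric.isOpen_ball
  have hUc : Convex ℝ U := (convex_halfSpace_re_gt _).inter (convex_ball _ _)
  have hd : DifferentiableOn ℂ (fun s => ∑' k, zT k s) U := by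
    have h : Summable (fun k : ℕ => (4 * (3 * ((k : ℝ) + 1) ^ (-(5 / 4 : ℝ))))) := by
      have := (summable_nat_add_iff 1).2
        (Real.summable_nat_rpow.2 (show -(5 / 4 : ℝ) < -1 by norm_num))
      simp only [Nat.cast_add, Nat.cast_one] at this
      exact (this.mul_left 3).mul_left 4
    refine Complex.differentiableOn_tsum_of_summable_norm h ?_ hUo ?_
    · intro k
      have a1 : (k + 1 : ℂ) ≠ 0 := by exact_mod_cast Nat.succ_ne_zero k
      have a2 : (k + 2 : ℂ) ≠ 0 := by exact_mod_cast Nat.succ_ne_zero (k + 1)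
      unfold zT
      refine Differentiable.differentiableOn ?_
      refine ((Differentiable.mul (by fun_prop) ?_).add ?_).sub ?_
      · exact Differentiable.const_cpow (by fun_prop) (Or.inl a1)
      · exact Differentiable.const_cpow (by fun_prop) (Or.inl a2)
      · exact Differentiable.const_cpow (by fun_prop) (Or.inl a1)
    · rintro k s ⟨h1, h2⟩
      simp only [mem_ofPred_eq, Metric.mem_ball, dist_zero_right] at h1 h2
      refine (zT_bound k s (by linarith)).trans ?_
      have : ‖1 - s‖ ≤ 4 := (norm_sub_le _ _).trans (by simp; linarith)
      gcongr
      · linarith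
      · linarith
  have ha := hd.analyticOnNhd hUo
  have hb : AnalyticOnNhd ℂ (fun s => riemannZeta₁ s - 1) U :=
    (differentiable_riemannZeta₁.sub_const 1).differentiableOn.analyticOnNhd hUo
  refine ha.eqOn_of_preconnected_of_eventuallyEq hb hUc.isPreconnected (z₀ := 2) ?_ ?_ ?_
  · simp [U]; norm_num
  · filter_upwards [(isOpen_lt continuous_const Complex.continuous_re).mem_nhds
      (show (1 : ℝ) < (2 : ℂ).re by simp)] with s hs
    exact zT_tsum_big s hs
  · simp [U]; norm_num

/-- `∑_{k<N} (k+1)^{-1/2} - 2√N → ζ(1/2)`. -/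
lemma zeta_half_limit : Tendsto (fun N : ℕ =>
    (((∑ i ∈ Finset.range N, ((i : ℝ) + 1) ^ (-(1 / 2) : ℝ)) - 2 * √N : ℝ) : ℂ)) atTop
    (𝓝 (riemannZeta (1 / 2))) := by
  have h1 := (zT_summable (1 / 2) (by norm_num)).hasSum.tendsto_sum_nat
  rw [zT_tsum_half] at h1
  simp_rw [zT_sum] at h1
  have hz : riemannZeta (1 / 2) = -2 * ((riemannZeta₁ (1 / 2) - 1) + 1) + 0 := by
    rw [riemannZeta_eq_inv_sub_mul (by norm_num)]; norm_num
  have h5 : Tendsto (fun N : ℕ => √((N : ℝ) + 1) - √N) atTop (𝓝 0) := by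
    have : Tendsto (fun N : ℕ => (√(N : ℝ))⁻¹) atTop (𝓝 0) :=
      tendsto_inv_atTop_zero.comp (Real.tendsto_sqrt_atTop.comp tendsto_natCast_atTop_atTop)
    refine squeeze_zero' (Eventually.of_forall fun N => ?_) ?_ this
    · exact sub_nonneg.2 (Real.sqrt_le_sqrt (by linarith))
    · filter_upwards [eventually_gt_atTop 0] with N hN
      have hN' : (0 : ℝ) < N := by exact_mod_cast hN
      have hs := Real.sqrt_pos.2 hN'
      rw [← one_div, le_div_iff₀ hs]
      nlinarith [Real.sq_sqrt hN'.le, Real.sq_sqrt (show (0 : ℝ) ≤ N + 1 by positivity),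
        Real.sqrt_nonneg ((N : ℝ) + 1), Real.sqrt_le_sqrt (show (N : ℝ) ≤ N + 1 by linarith)]
  have h6 : Tendsto (fun N : ℕ => ((2 * (√((N : ℝ) + 1) - √N) : ℝ) : ℂ)) atTop (𝓝 0) := by
    have := (Complex.continuous_ofReal.tendsto _).comp (h5.const_mul 2)
    rw [mul_zero, Complex.ofReal_zero] at this
    exact this
  rw [hz]
  refine (((h1.add_const 1).const_mul (-2)).add h6).congr fun N => ?_
  have e1 : ∀ i : ℕ, (i + 1 : ℂ) ^ (-(1 / 2) : ℂ) = ((((i : ℝ) + 1) ^ (-(1 / 2) : ℝ) : ℝ) : ℂ) := by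
    intro i; rw [Complex.ofReal_cpow (by positivity)]; push_cast; rfl
  have e2 : ((N : ℂ) + 1) ^ (1 - 1 / 2 : ℂ) = ((√((N : ℝ) + 1) : ℝ) : ℂ) := by
    rw [Real.sqrt_eq_rpow, Complex.ofReal_cpow (by positivity)]; push_cast; norm_num
  simp_rw [e1, e2]
  push_cast; ring
end CC

namespace CC
open Filter Topology Set MeasureTheory

lemma rpow_mul_exp_le {σ c u : ℝ} (hσ : 0 ≤ σ) (hc : 0 < c) (hu : 0 ≤ u) :
    u ^ σ * Real.exp (-(c * u)) ≤ (σ / c) ^ σ := by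
  rcases hσ.eq_or_lt with rfl | hσ
  · simp; positivity
  have h1 : c * u / σ ≤ Real.exp (c * u / σ) := by
    linarith [Real.add_one_le_exp (c * u / σ)]
  have h2 : (c * u / σ) ^ σ ≤ Real.exp (c * u) := by
    calc (c * u / σ) ^ σ ≤ (Real.exp (c * u / σ)) ^ σ :=
          Real.rpow_le_rpow (by positivity) h1 hσ.le
      _ = Real.exp (c * u) := by rw [← Real.exp_mul]; congr 1; field_simp
  have h3 : u ^ σ = (σ / c) ^ σ * (c * u / σ) ^ σ := by
    rw [← Real.mul_rpow (by positivity) (by positivity)]; congr 1; field_simp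
  rw [h3, mul_assoc]
  refine mul_le_of_le_one_right (by positivity) ?_
  calc _ ≤ Real.exp (c * u) * Real.exp (-(c * u)) := by gcongr
    _ = 1 := by rw [← Real.exp_add]; simp

lemma rpow_neg_exp_bound (σ c : ℝ) (hσ : 0 ≤ σ) (hc : 0 < c) {t : ℝ} (ht : 0 < t) :
    t ^ (-σ) * Real.exp (-(c / t)) ≤ (σ / c) ^ σ := by
  have := rpow_mul_exp_le (u := t⁻¹) hσ hc (by positivity)
  rwa [Real.inv_rpow ht.le, ← Real.rpow_neg ht.le, ← div_eq_mul_inv] at this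

lemma integrableOn_rpow_exp (σ c : ℝ) (hσ : 1 < σ) (hc : 0 < c) :
    IntegrableOn (fun t : ℝ => t ^ (-σ) * Real.exp (-(c / t))) (Ioi 0) := by
  have hcont : ContinuousOn (fun t : ℝ => t ^ (-σ) * Real.exp (-(c / t))) (Ioi 0) := by
    intro t ht
    have ht' : t ≠ 0 := (mem_Ioi.1 ht).ne'
    refine ContinuousAt.continuousWithinAt ?_
    refine (Real.continuousAt_rpow_const _ _ (Or.inl ht')).mul ?_
    exact Real.continuous_exp.continuousAt.comp
      ((continuousAt_const.div continuousAt_id ht').neg)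
  rw [← Ioc_union_Ioi_eq_Ioi (zero_le_one' ℝ), integrableOn_union]
  constructor
  · refine Integrable.mono' (g := fun _ => (σ / c) ^ σ) (integrable_const _)
      ((hcont.mono Ioc_subset_Ioi_self).aestronglyMeasurable measurableSet_Ioc) ?_
    refine (ae_restrict_iff' measurableSet_Ioc).2 (Eventually.of_forall fun t ht => ?_)
    have : 0 < t := ht.1
    rw [Real.norm_of_nonneg (by positivity)]
    exact rpow_neg_exp_bound σ c (by linarith) hc ht.1
  · refine Integrable.mono' (integrableOn_Ioi_rpow_of_lt (show -σ < -1 by linarith) one_pos)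
      ((hcont.mono (Ioi_subset_Ioi zero_le_one)).aestronglyMeasurable measurableSet_Ioi) ?_
    refine (ae_restrict_iff' measurableSet_Ioi).2 (Eventually.of_forall fun t ht => ?_)
    have : 0 < t := one_pos.trans ht
    rw [Real.norm_of_nonneg (by positivity)]
    refine mul_le_of_le_one_right (by positivity) (Real.exp_le_one_iff.2 ?_)
    have : 0 < c / t := by positivity
    linarith

/-- real Laplace transform -/
lemma real_laplace (p q : ℝ) (hp : 0 < p) (hq : 0 < q) :
    ∫ t in Ioi (0 : ℝ), t ^ (-(3 / 2) : ℝ) * Real.exp (-(p ^ 2 / t)) * Real.exp (-(q ^ 2 * t)) =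
      √Real.pi / p * Real.exp (-(2 * p * q)) := by
  set E : ℝ → ℝ := fun t => Real.exp (-(p ^ 2 / t)) * Real.exp (-(q ^ 2 * t)) with hE
  set g : ℝ → ℝ := fun t => p * t ^ (-(3 / 2) : ℝ) * E t with hg
  set g' : ℝ → ℝ := fun t => q * t ^ (-(1 / 2) : ℝ) * E t with hg'
  have key1 : ∫ t in Ioi (0 : ℝ), (g t + g' t) = 2 * √Real.pi * Real.exp (-(2 * p * q)) ∧
      IntegrableOn (fun t => g t + g' t) (Ioi 0) := by
    let f : ℝ → ℝ := fun t => q * t ^ ((1 / 2) : ℝ) - p * t ^ (-(1 / 2) : ℝ)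
    let f' : ℝ → ℝ := fun t => q * ((1 / 2) * t ^ ((1 / 2) - 1 : ℝ)) -
      p * (-(1 / 2) * t ^ (-(1 / 2) - 1 : ℝ))
    have hfd : ∀ t ∈ Ioi (0 : ℝ), HasDerivWithinAt f (f' t) (Ioi 0) t := by
      intro t ht
      have ht' : t ≠ 0 := (mem_Ioi.1 ht).ne'
      exact (((Real.hasDerivAt_rpow_const (Or.inl ht')).const_mul q).sub
        ((Real.hasDerivAt_rpow_const (Or.inl ht')).const_mul p)).hasDerivWithinAt
    have hinj : InjOn f (Ioi 0) := by
      refine StrictMonoOn.injOn ?_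
      intro a ha b hb hab
      have h1 : a ^ ((1 / 2) : ℝ) < b ^ ((1 / 2) : ℝ) :=
        Real.rpow_lt_rpow (le_of_lt ha) hab (by norm_num)
      have h2 : b ^ (-(1 / 2) : ℝ) < a ^ (-(1 / 2) : ℝ) :=
        Real.rpow_lt_rpow_of_neg ha hab (by norm_num)
      simp only [f]
      nlinarith [mul_lt_mul_of_pos_left h1 hq, mul_lt_mul_of_pos_left h2 hp]
    have himg : Set.image f (Ioi 0) = univ := by
      refine eq_univ_of_forall fun y => ?_
      set d := √(y ^ 2 + 4 * p * q) with hd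
      have hd2 : d ^ 2 = y ^ 2 + 4 * p * q := Real.sq_sqrt (by positivity)
      have hd0 : 0 ≤ d := Real.sqrt_nonneg _
      have hpos : 0 < y + d := by
        by_contra hcon
        have : d ≤ -y := by linarith
        nlinarith [mul_pos hp hq, mul_self_le_mul_self hd0 this]
      set r := (y + d) / (2 * q) with hr
      have hr0 : 0 < r := by positivity
      refine ⟨r ^ 2, by simp only [mem_Ioi]; positivity, ?_⟩
      have e1 : (r ^ 2) ^ ((1 / 2) : ℝ) = r := by
        rw [← Real.sqrt_eq_rpow, Real.sqrt_sq hr0.le]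
      have e2 : (r ^ 2) ^ (-(1 / 2) : ℝ) = r⁻¹ := by
        rw [Real.rpow_neg (by positivity), e1]
      simp only [f, e1, e2]
      have : q * r ^ 2 - y * r - p = 0 := by
        have : q * ((y + d) / (2 * q)) ^ 2 - y * ((y + d) / (2 * q)) - p
          = (d ^ 2 - y ^ 2 - 4 * p * q) / (4 * q) := by field_simp; ring
        rw [hr, this, hd2]; ring
      field_simp
      linarith
    have hcong : ∀ t ∈ Ioi (0 : ℝ), |f' t| • Real.exp (-1 * (f t) ^ 2) =
        (Real.exp (2 * p * q) / 2) * (g t + g' t) := by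
      intro t ht
      have ht : 0 < t := ht
      have ef : f' t = (q * t ^ (-(1 / 2) : ℝ) + p * t ^ (-(3 / 2) : ℝ)) / 2 := by
        simp only [f']; norm_num; ring
      have a : t ^ ((1 / 2) : ℝ) * t ^ (-(1 / 2) : ℝ) = 1 := by
        rw [← Real.rpow_add ht]; norm_num
      have b : (t ^ ((1 / 2) : ℝ)) ^ 2 = t := by
        rw [← Real.rpow_natCast, ← Real.rpow_mul ht.le]; norm_num
      have c : (t ^ (-(1 / 2) : ℝ)) ^ 2 = t⁻¹ := by
        rw [← Real.rpow_natCast, ← Real.rpow_mul ht.le]; norm_num [Real.rpow_neg_one]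
      have ee : -1 * (f t) ^ 2 = 2 * p * q + (-(p ^ 2 / t) + -(q ^ 2 * t)) := by
        have : (f t) ^ 2 = q ^ 2 * (t ^ ((1 / 2) : ℝ)) ^ 2 + p ^ 2 * (t ^ (-(1 / 2) : ℝ)) ^ 2
          - 2 * p * q * (t ^ ((1 / 2) : ℝ) * t ^ (-(1 / 2) : ℝ)) := by simp only [f]; ring
        rw [this, a, b, c]; field_simp; ring
      rw [ee, ef, abs_of_nonneg (by positivity), Real.exp_add, Real.exp_add, smul_eq_mul]
      simp only [hg, hg', hE]
      ring
    have h1 := integral_image_eq_integral_abs_deriv_smul measurableSet_Ioi hfd hinj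
      (fun y => Real.exp (-1 * y ^ 2))
    have h2 := integrableOn_image_iff_integrableOn_abs_deriv_smul measurableSet_Ioi hfd hinj
      (fun y => Real.exp (-1 * y ^ 2))
    rw [himg] at h1 h2
    rw [setIntegral_congr_fun measurableSet_Ioi hcong, setIntegral_univ, integral_gaussian,
      integral_const_mul] at h1
    rw [integrableOn_congr_fun hcong measurableSet_Ioi, integrableOn_univ] at h2
    have h3 := h2.1 (integrable_exp_neg_mul_sq one_pos)
    have he := Real.exp_pos (2 * p * q)
    constructor
    · rw [Real.exp_neg]
      rw [div_one] at h1
      field_simp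
      linarith
    · have := h3.const_mul (Real.exp (2 * p * q) / 2)⁻¹
      refine this.congr (Eventually.of_forall fun t => ?_)
      simp only
      rw [← mul_assoc, inv_mul_cancel₀ (by positivity), one_mul]
  have key2 : ∫ t in Ioi (0 : ℝ), g t = ∫ t in Ioi (0 : ℝ), g' t := by
    set c := p ^ 2 / q ^ 2 with hc
    have hc0 : 0 < c := by positivity
    have hfd : ∀ t ∈ Ioi (0 : ℝ), HasDerivWithinAt (fun t => c * t⁻¹) (c * -(t ^ 2)⁻¹) (Ioi 0) t := by
      intro t ht
      exact ((hasDerivAt_inv (mem_Ioi.1 ht).ne').const_mul c).hasDerivWithinAt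
    have hinj : InjOn (fun t => c * t⁻¹) (Ioi 0) := by
      intro a ha b hb hab
      simp only [mul_eq_mul_left_iff, inv_inj, hc0.ne', or_false] at hab
      exact hab
    have himg : Set.image (fun t => c * t⁻¹) (Ioi 0) = Ioi 0 := by
      ext y; constructor
      · rintro ⟨t, ht, rfl⟩
        have ht : 0 < t := ht
        simp only [mem_Ioi]; positivity
      · intro hy
        have hy : 0 < y := hy
        refine ⟨c * y⁻¹, by simp only [mem_Ioi]; positivity, ?_⟩
        field_simp
    have h1 := integral_image_eq_integral_abs_deriv_smul measurableSet_Ioi hfd hinj g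
    rw [himg] at h1
    rw [h1]
    refine setIntegral_congr_fun measurableSet_Ioi fun t ht => ?_
    have ht : 0 < t := ht
    have e1 : |c * -(t ^ 2)⁻¹| = c * t ^ (-2 : ℝ) := by
      rw [abs_mul, abs_neg, abs_of_pos hc0, abs_of_pos (by positivity), Real.rpow_neg ht.le]
      norm_cast
    have e2 : (c * t⁻¹) ^ (-(3 / 2) : ℝ) = c ^ (-(3 / 2) : ℝ) * t ^ ((3 / 2) : ℝ) := by
      rw [Real.mul_rpow hc0.le (by positivity), Real.inv_rpow ht.le, Real.rpow_neg ht.le, inv_inv]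
    have e3 : c * c ^ (-(3 / 2) : ℝ) = q / p := by
      have : c * c ^ (-(3 / 2) : ℝ) = c ^ (-(1 / 2) : ℝ) := by
        nth_rewrite 1 [← Real.rpow_one c]
        rw [← Real.rpow_add hc0]; norm_num
      rw [this, Real.rpow_neg hc0.le, ← Real.sqrt_eq_rpow, hc, ← div_pow,
        Real.sqrt_sq (by positivity), inv_div]
    have e4 : t ^ (-2 : ℝ) * t ^ ((3 / 2) : ℝ) = t ^ (-(1 / 2) : ℝ) := by
      rw [← Real.rpow_add ht]; norm_num
    have e5 : E (c * t⁻¹) = E t := by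
      simp only [hE]
      rw [mul_comm]
      congr 2 <;> (rw [hc]; field_simp)
    simp only [hg, hg', e1, e2, e5, smul_eq_mul]
    calc _ = p * (c * c ^ (-(3 / 2) : ℝ)) * (t ^ (-2 : ℝ) * t ^ ((3 / 2) : ℝ)) * E t := by ring
      _ = _ := by rw [e3, e4]; field_simp
  have hgi : IntegrableOn g (Ioi 0) := by
    refine Integrable.mono' key1.2 ?_ ?_
    · refine ContinuousOn.aestronglyMeasurable (fun t ht => ?_) measurableSet_Ioi
      have ht' : t ≠ 0 := (mem_Ioi.1 ht).ne'
      refine ContinuousAt.continuousWithinAt ?_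
      simp only [hg, hE]
      have := Real.continuousAt_rpow_const t (-(3 / 2) : ℝ) (Or.inl ht')
      fun_prop (disch := assumption)
    · refine (ae_restrict_iff' measurableSet_Ioi).2 (Eventually.of_forall fun t ht => ?_)
      have ht : 0 < t := ht
      have : 0 ≤ g t := by simp only [hg, hE]; positivity
      have : 0 ≤ g' t := by simp only [hg', hE]; positivity
      rw [Real.norm_of_nonneg (by assumption)]; linarith
  have hgi' : IntegrableOn g' (Ioi 0) := by
    have := key1.2.sub hgi
    refine this.congr (Eventually.of_forall fun t => ?_)
    simp
  have h := key1.1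
  rw [integral_add hgi hgi', ← key2] at h
  have e : ∫ t in Ioi (0 : ℝ), g t = p * ∫ t in Ioi (0 : ℝ), t ^ (-(3 / 2) : ℝ) *
      Real.exp (-(p ^ 2 / t)) * Real.exp (-(q ^ 2 * t)) := by
    rw [← integral_const_mul]
    refine setIntegral_congr_fun measurableSet_Ioi fun t ht => ?_
    simp only [hg, hE]; ring
  rw [e] at h
  rw [div_mul_eq_mul_div, eq_div_iff hp.ne']
  linarith

/-- The basic kernel. -/
noncomputable def hh (A : ℝ) (z : ℂ) : ℂ := z ^ (-(3 / 2) : ℂ) * Complex.exp (-(A / z))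

lemma hh_ofReal (A : ℝ) {t : ℝ} (ht : 0 < t) :
    hh A t = ((t ^ (-(3 / 2) : ℝ) * Real.exp (-(A / t)) : ℝ) : ℂ) := by
  unfold hh
  push_cast
  rw [Complex.ofReal_cpow ht.le]; push_cast; rfl

lemma norm_hh_ofReal (A : ℝ) {t : ℝ} (ht : 0 < t) :
    ‖hh A t‖ = t ^ (-(3 / 2) : ℝ) * Real.exp (-(A / t)) := by
  rw [hh_ofReal A ht, Complex.norm_real, Real.norm_of_nonneg (by positivity)]

lemma hh_differentiableAt (A : ℝ) {z : ℂ} (hz : 0 < z.re) : DifferentiableAt ℂ (hh A) z := by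
  have hz0 : z ≠ 0 := by rintro rfl; simp at hz
  unfold hh
  refine DifferentiableAt.mul ?_ ?_
  · exact DifferentiableAt.cpow_const differentiableAt_id (Or.inl hz)
  · fun_prop (disch := assumption)

lemma hh_continuousOn (A : ℝ) : ContinuousOn (fun t : ℝ => hh A t) (Ioi 0) := by
  intro t ht
  have := (hh_differentiableAt A (z := (t : ℂ)) (by simpa using ht)).continuousAt
  exact (this.comp (f := fun t : ℝ => (t : ℂ)) Complex.continuous_ofReal.continuousAt).continuousWithinAt

lemma hh_integrableOn (A : ℝ) (hA : 0 < A) : IntegrableOn (fun t : ℝ => hh A t) (Ioi 0) := by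
  refine Integrable.mono' (integrableOn_rpow_exp (3 / 2) A (by norm_num) hA)
    ((hh_continuousOn A).aestronglyMeasurable measurableSet_Ioi) ?_
  refine (ae_restrict_iff' measurableSet_Ioi).2 (Eventually.of_forall fun t ht => ?_)
  rw [norm_hh_ofReal A ht]

lemma norm_exp_neg_mul_le {B : ℂ} (hB : 0 ≤ B.re) {t : ℝ} (ht : 0 < t) :
    ‖Complex.exp (-(B * t))‖ ≤ 1 := by
  rw [Complex.norm_exp]
  simp only [Complex.neg_re, Complex.re_mul_ofReal, Real.exp_le_one_iff]
  have := mul_nonneg hB ht.le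
  linarith

noncomputable def LL (φ : ℝ → ℂ) (B : ℂ) : ℂ := ∫ t in Ioi (0 : ℝ), φ t * Complex.exp (-(B * t))

lemma LL_meas {φ : ℝ → ℂ} (hφ : IntegrableOn φ (Ioi 0)) (B : ℂ) :
    AEStronglyMeasurable (fun t : ℝ => φ t * Complex.exp (-(B * t))) (volume.restrict (Ioi 0)) :=
  hφ.aestronglyMeasurable.mul (Continuous.aestronglyMeasurable (by fun_prop))

lemma LL_integrable {φ : ℝ → ℂ} (hφ : IntegrableOn φ (Ioi 0)) {B : ℂ} (hB : 0 ≤ B.re) :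
    IntegrableOn (fun t : ℝ => φ t * Complex.exp (-(B * t))) (Ioi 0) := by
  refine Integrable.mono' hφ.norm (LL_meas hφ B) ?_
  refine (ae_restrict_iff' measurableSet_Ioi).2 (Eventually.of_forall fun t ht => ?_)
  rw [norm_mul]
  exact mul_le_of_le_one_right (norm_nonneg _) (norm_exp_neg_mul_le hB ht)

lemma LL_continuousOn {φ : ℝ → ℂ} (hφ : IntegrableOn φ (Ioi 0)) :
    ContinuousOn (LL φ) {B : ℂ | 0 ≤ B.re} := by
  unfold LL
  refine continuousOn_of_dominated (bound := fun t => ‖φ t‖) (fun B _ => LL_meas hφ B) ?_ hφ.norm ?_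
  · intro B hB
    refine (ae_restrict_iff' measurableSet_Ioi).2 (Eventually.of_forall fun t ht => ?_)
    rw [norm_mul]
    exact mul_le_of_le_one_right (norm_nonneg _) (norm_exp_neg_mul_le hB ht)
  · exact Eventually.of_forall fun t => by fun_prop

lemma LL_differentiableAt {φ : ℝ → ℂ} (hφ : IntegrableOn φ (Ioi 0)) {B : ℂ} (hB : 0 < B.re) :
    DifferentiableAt ℂ (LL φ) B := by
  set δ := B.re / 2 with hδ
  have hδ0 : 0 < δ := by positivity
  have := hasDerivAt_integral_of_dominated_loc_of_deriv_le (μ := volume.restrict (Ioi (0 : ℝ)))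
    (F := fun (B : ℂ) (t : ℝ) => φ t * Complex.exp (-(B * t)))
    (F' := fun (B : ℂ) (t : ℝ) => φ t * (Complex.exp (-(B * t)) * (-(1 * (t : ℂ)))))
    (x₀ := B) (s := Metric.ball B δ) (bound := fun t => ‖φ t‖ * (1 / δ) ) (Metric.ball_mem_nhds _ hδ0)
    (Eventually.of_forall fun B => LL_meas hφ B) (LL_integrable hφ hB.le)
    (hφ.aestronglyMeasurable.mul (Continuous.aestronglyMeasurable (by fun_prop)))
    ?_ (hφ.norm.mul_const _) ?_
  · exact this.2.differentiableAt
  · refine (ae_restrict_iff' measurableSet_Ioi).2 (Eventually.of_forall fun t ht => ?_)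
    intro C hC
    have ht : 0 < t := ht
    rw [norm_mul]
    refine mul_le_mul_of_nonneg_left ?_ (norm_nonneg _)
    have hC' : δ < C.re := by
      have h1 := (Complex.abs_re_le_norm (C - B)).trans_lt (by simpa [dist_eq_norm] using hC)
      rw [Complex.sub_re, abs_lt] at h1
      linarith [h1.1]
    rw [norm_mul, Complex.norm_exp]
    simp only [Complex.neg_re, Complex.re_mul_ofReal, one_mul, norm_neg, Complex.norm_real,
      Real.norm_of_nonneg ht.le]
    have h2 : Real.exp (-(C.re * t)) ≤ Real.exp (-(δ * t)) :=
      Real.exp_le_exp.2 (by nlinarith)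
    have h3 : δ * t ≤ Real.exp (δ * t) := by linarith [Real.add_one_le_exp (δ * t)]
    calc _ ≤ Real.exp (-(δ * t)) * t := by gcongr
      _ ≤ 1 / δ := by
        rw [Real.exp_neg, inv_mul_eq_div, div_le_div_iff₀ (Real.exp_pos _) hδ0]
        linarith
  · refine (ae_restrict_iff' measurableSet_Ioi).2 (Eventually.of_forall fun t ht => ?_)
    intro C hC
    exact ((((hasDerivAt_id C).mul_const (t : ℂ)).neg).cexp).const_mul (φ t)

lemma LL_hh_sector (p : ℝ) (hp : 0 < p) : ∀ w ∈ {w : ℂ | |w.im| < w.re},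
    LL (fun t : ℝ => hh (p ^ 2) t) (w ^ 2) = ((√Real.pi / p : ℝ) : ℂ) * Complex.exp (-(2 * p * w)) := by
  set S : Set ℂ := {w : ℂ | |w.im| < w.re} with hS
  have hSo : IsOpen S := isOpen_lt (by fun_prop) (by fun_prop)
  have hre : ∀ w ∈ S, 0 < (w ^ 2).re := by
    intro w hw
    have h1 : |w.im| < w.re := hw
    have : (w ^ 2).re = w.re ^ 2 - |w.im| ^ 2 := by rw [sq_abs, sq w, Complex.mul_re]; ring
    rw [this]
    nlinarith [abs_nonneg w.im]
  have hSc : Convex ℝ S := by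
    have : S = {w : ℂ | w.im < w.re} ∩ {w : ℂ | -w.re < w.im} := by
      ext w; simp only [hS, mem_ofPred_eq, mem_inter_iff, abs_lt]; tauto
    rw [this]
    refine Convex.inter ?_ ?_
    · intro a ha b hb u v hu hv huv
      simp only [mem_ofPred_eq, Complex.add_re, Complex.add_im, Complex.real_smul,
        Complex.re_ofReal_mul, Complex.im_ofReal_mul] at *
      rcases hu.eq_or_lt with rfl | hu
      · have : v = 1 := by linarith
        subst this; linarith
      · nlinarith [mul_lt_mul_of_pos_left ha hu, mul_le_mul_of_nonneg_left hb.le hv]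
    · intro a ha b hb u v hu hv huv
      simp only [mem_ofPred_eq, Complex.add_re, Complex.add_im, Complex.real_smul,
        Complex.re_ofReal_mul, Complex.im_ofReal_mul] at *
      rcases hu.eq_or_lt with rfl | hu
      · have : v = 1 := by linarith
        subst this; linarith
      · nlinarith [mul_lt_mul_of_pos_left ha hu, mul_le_mul_of_nonneg_left hb.le hv]
  have hi := hh_integrableOn (p ^ 2) (by positivity)
  have ha : AnalyticOnNhd ℂ (fun w : ℂ => LL (fun t : ℝ => hh (p ^ 2) t) (w ^ 2)) S := by
    refine DifferentiableOn.analyticOnNhd (fun w hw => ?_) hSo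
    refine DifferentiableAt.differentiableWithinAt ?_
    exact DifferentiableAt.comp (g := LL (fun t : ℝ => hh (p ^ 2) t)) (f := fun w : ℂ => w ^ 2) w
      (LL_differentiableAt hi (hre w hw)) (by fun_prop)
  have hb : AnalyticOnNhd ℂ
      (fun w : ℂ => ((√Real.pi / p : ℝ) : ℂ) * Complex.exp (-(2 * p * w))) S :=
    DifferentiableOn.analyticOnNhd (by fun_prop) hSo
  refine ha.eqOn_of_preconnected_of_frequently_eq hb hSc.isPreconnected (z₀ := 1)
    (by simp [hS]) ?_
  have hseq : Tendsto (fun n : ℕ => ((1 + 1 / ((n : ℝ) + 1) : ℝ) : ℂ)) atTop (𝓝[≠] 1) := by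
    refine tendsto_nhdsWithin_iff.2 ⟨?_, Eventually.of_forall fun n => ?_⟩
    · have := (Complex.continuous_ofReal.tendsto _).comp
        ((tendsto_one_div_add_atTop_nhds_zero_nat (𝕜 := ℝ)).const_add 1)
      simpa [Function.comp_def] using this
    · have : (0 : ℝ) < 1 / ((n : ℝ) + 1) := by positivity
      intro h
      have h : ((1 + 1 / ((n : ℝ) + 1) : ℝ) : ℂ) = ((1 : ℝ) : ℂ) := by simpa using h
      have := Complex.ofReal_injective h
      linarith
  refine hseq.frequently (Frequently.of_forall fun n => ?_)
  have hq : (0 : ℝ) < 1 + 1 / ((n : ℝ) + 1) := by positivity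
  generalize 1 + 1 / ((n : ℝ) + 1) = q at hq
  have := real_laplace p q hp hq
  have e : LL (fun t : ℝ => hh (p ^ 2) t) ((q : ℂ) ^ 2) = ((∫ t in Ioi (0 : ℝ), t ^ (-(3 / 2) : ℝ) *
      Real.exp (-(p ^ 2 / t)) * Real.exp (-(q ^ 2 * t)) : ℝ) : ℂ) := by
    unfold LL
    rw [← integral_complex_ofReal]
    refine setIntegral_congr_fun measurableSet_Ioi fun t ht => ?_
    simp only
    rw [hh_ofReal _ ht]
    push_cast; rfl
  rw [e, this]; push_cast; ring_nf

lemma LL_hh (p : ℝ) (hp : 0 < p) (w : ℂ) (hw : |w.im| ≤ w.re) :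
    LL (fun t : ℝ => hh (p ^ 2) t) (w ^ 2) = ((√Real.pi / p : ℝ) : ℂ) * Complex.exp (-(2 * p * w)) := by
  have hi := hh_integrableOn (p ^ 2) (by positivity)
  have hre : ∀ ε : ℝ, 0 ≤ ε → 0 ≤ ((w + ε) ^ 2 : ℂ).re := by
    intro ε hε
    have : ((w + ε) ^ 2 : ℂ).re = (w.re + ε) ^ 2 - |w.im| ^ 2 := by
      rw [sq_abs, sq, Complex.mul_re]; simp; ring
    rw [this]
    nlinarith [abs_nonneg w.im]
  have h1 : Tendsto (fun ε : ℝ => (w + ε) ^ 2) (𝓝[>] 0) (𝓝[{B : ℂ | 0 ≤ B.re}] (w ^ 2)) := by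
    refine tendsto_nhdsWithin_iff.2 ⟨?_, ?_⟩
    · have : Tendsto (fun ε : ℝ => (w + ε) ^ 2) (𝓝 0) (𝓝 ((w + (0 : ℝ)) ^ 2)) :=
        Continuous.tendsto (by fun_prop) 0
      simp only [Complex.ofReal_zero, add_zero] at this
      exact this.mono_left nhdsWithin_le_nhds
    · filter_upwards [self_mem_nhdsWithin] with ε hε
      exact hre ε (le_of_lt hε)
  have hw0 : w ^ 2 ∈ {B : ℂ | 0 ≤ B.re} := by simpa using hre 0 le_rfl
  have h2 := ((LL_continuousOn hi) (w ^ 2) hw0).tendsto.comp h1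
  have h3 : Tendsto (fun ε : ℝ => ((√Real.pi / p : ℝ) : ℂ) * Complex.exp (-(2 * p * (w + ε))))
      (𝓝[>] 0) (𝓝 (((√Real.pi / p : ℝ) : ℂ) * Complex.exp (-(2 * p * (w + (0 : ℝ)))))) :=
    (Continuous.tendsto (by fun_prop) 0).mono_left nhdsWithin_le_nhds
  simp only [Complex.ofReal_zero, add_zero] at h3
  refine tendsto_nhds_unique h2 (h3.congr' ?_)
  filter_upwards [self_mem_nhdsWithin] with ε hε
  have hε : 0 < ε := hε
  refine (LL_hh_sector p hp (w + ε) ?_).symm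
  simp only [mem_ofPred_eq, Complex.add_im, Complex.ofReal_im, add_zero, Complex.add_re,
    Complex.ofReal_re]
  linarith
end CC

namespace CC
open Filter Topology Set MeasureTheory

def RH : Set ℂ := {z : ℂ | 0 < z.re}

lemma RH_open : IsOpen RH := isOpen_lt continuous_const Complex.continuous_re

lemma iter_diffOn {f : ℂ → ℂ} {U : Set ℂ} (hU : IsOpen U) (hf : DifferentiableOn ℂ f U) (l : ℕ) :
    DifferentiableOn ℂ (iteratedDeriv l f) U := by
  induction l with
  | zero => simpa [iteratedDeriv_zero] using hf
  | succ n ih => rw [iteratedDeriv_succ]; exact ih.deriv hU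

lemma hh_diffOn (A : ℝ) : DifferentiableOn ℂ (hh A) RH :=
  fun _ hz => (hh_differentiableAt A hz).differentiableWithinAt

lemma disc_geom {t : ℝ} (ht : 0 < t) {z : ℂ} (hz : ‖z - t‖ ≤ t / 2) :
    t / 2 ≤ z.re ∧ |z.im| ≤ t / 2 ∧ t / 2 ≤ ‖z‖ ∧ ‖z‖ ≤ 3 * t / 2 := by
  have h1 := (Complex.abs_re_le_norm (z - t)).trans hz
  have h2 := (Complex.abs_im_le_norm (z - t)).trans hz
  simp only [Complex.sub_re, Complex.ofReal_re, Complex.sub_im, Complex.ofReal_im, sub_zero] at h1 h2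
  rw [abs_le] at h1
  have h3 : ‖z‖ ≤ ‖z - t‖ + ‖(t : ℂ)‖ := by simpa using norm_add_le (z - t) (t : ℂ)
  rw [Complex.norm_real, Real.norm_of_nonneg ht.le] at h3
  have h4 := (le_abs_self z.re).trans (Complex.abs_re_le_norm z)
  refine ⟨by linarith, h2, by linarith, by linarith⟩

lemma disc_subset {t : ℝ} (ht : 0 < t) : Metric.closedBall (t : ℂ) (t / 2) ⊆ RH := by
  intro z hz
  have := (disc_geom ht (by simpa [dist_eq_norm] using hz)).1
  show 0 < z.re
  linarith

/-- Cauchy estimate. -/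
lemma cauchy_bound {f : ℂ → ℂ} (hf : DifferentiableOn ℂ f RH) {t C : ℝ} (ht : 0 < t) (l : ℕ)
    (hC : ∀ z : ℂ, ‖z - t‖ ≤ t / 2 → ‖f z‖ ≤ C) :
    ‖iteratedDeriv l f t‖ ≤ l.factorial * C / (t / 2) ^ l := by
  refine Complex.norm_iteratedDeriv_le_of_forall_mem_sphere_norm_le l (by positivity) ?_ ?_
  · refine (hf.mono ?_).diffContOnCl
    rw [closure_ball _ (by positivity)]
    exact disc_subset ht
  · intro z hz
    exact hC z (by rw [← dist_eq_norm]; exact (Metric.mem_sphere.1 hz).le)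

lemma exp_disc_bound {A t : ℝ} (hA : 0 ≤ A) (ht : 0 < t) {z : ℂ} (hz : ‖z - t‖ ≤ t / 2) :
    ‖Complex.exp (-(A / z))‖ ≤ Real.exp (-(2 * A / 9 / t)) := by
  obtain ⟨h1, h2, h3, h4⟩ := disc_geom ht hz
  have e : ((A : ℂ) / z).re = A * (z.re / ‖z‖ ^ 2) := by
    rw [div_eq_mul_inv, Complex.re_ofReal_mul, Complex.inv_re, Complex.normSq_eq_norm_sq]
  rw [Complex.norm_exp, Real.exp_le_exp, Complex.neg_re, neg_le_neg_iff, e]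
  have h0 : 0 < ‖z‖ := by linarith
  have : 2 / (9 * t) ≤ z.re / ‖z‖ ^ 2 := by
    rw [div_le_div_iff₀ (by positivity) (by positivity)]
    nlinarith [mul_self_le_mul_self h0.le h4]
  calc 2 * A / 9 / t = A * (2 / (9 * t)) := by field_simp
    _ ≤ _ := by gcongr

lemma cpow_disc_bound {r t : ℝ} (hr : 0 ≤ r) (ht : 0 < t) {z : ℂ} (hz : ‖z - t‖ ≤ t / 2) :
    ‖z ^ (((-r : ℝ)) : ℂ)‖ ≤ (t / 2) ^ (-r) := by
  obtain ⟨h1, h2, h3, h4⟩ := disc_geom ht hz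
  rw [Complex.norm_cpow_real]
  exact Real.rpow_le_rpow_of_nonpos (by positivity) h3 (by linarith)

lemma hh_disc_bound {A t : ℝ} (hA : 0 ≤ A) (ht : 0 < t) {z : ℂ} (hz : ‖z - t‖ ≤ t / 2) :
    ‖hh A z‖ ≤ (t / 2) ^ (-(3 / 2) : ℝ) * Real.exp (-(2 * A / 9 / t)) := by
  unfold hh
  rw [norm_mul]
  have := cpow_disc_bound (r := 3 / 2) (by norm_num) ht hz
  push_cast at this
  exact mul_le_mul this (exp_disc_bound hA ht hz) (norm_nonneg _) (by positivity)

noncomputable def Cl (l : ℕ) : ℝ := l.factorial * (1 / 2 : ℝ) ^ (-(l + 3 / 2) : ℝ)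

lemma Cl_pos (l : ℕ) : 0 < Cl l := by unfold Cl; positivity

lemma hh_iter_bound {A t : ℝ} (hA : 0 ≤ A) (ht : 0 < t) (l : ℕ) :
    ‖iteratedDeriv l (hh A) t‖ ≤
      Cl l * (t ^ (-(l + 3 / 2) : ℝ) * Real.exp (-(2 * A / 9 / t))) := by
  refine (cauchy_bound (hh_diffOn A) ht l fun z hz => hh_disc_bound hA ht hz).trans (le_of_eq ?_)
  have e : t ^ (-(l + 3 / 2) : ℝ) * (1 / 2 : ℝ) ^ (-(l + 3 / 2) : ℝ) =
      (t / 2) ^ (-(3 / 2) : ℝ) / (t / 2) ^ l := by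
    rw [← Real.mul_rpow ht.le (by norm_num), mul_one_div, ← Real.rpow_natCast,
      ← Real.rpow_sub (by positivity)]
    congr 1; ring
  unfold Cl
  calc _ = l.factorial * ((t / 2) ^ (-(3 / 2) : ℝ) / (t / 2) ^ l) * Real.exp (-(2 * A / 9 / t)) := by
        ring
    _ = _ := by rw [← e]; ring

lemma hh_iter_hasDerivAt (A : ℝ) (l : ℕ) {t : ℝ} (ht : 0 < t) :
    HasDerivAt (fun t : ℝ => iteratedDeriv l (hh A) t) (iteratedDeriv (l + 1) (hh A) t) t := by
  have h := (iter_diffOn RH_open (hh_diffOn A) l).differentiableAt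
    (RH_open.mem_nhds (show (t : ℂ) ∈ RH by simpa [RH] using ht))
  have := h.hasDerivAt.comp_ofReal
  rwa [← iteratedDeriv_succ] at this

lemma hh_iter_integrable {A : ℝ} (hA : 0 < A) (l : ℕ) :
    IntegrableOn (fun t : ℝ => iteratedDeriv l (hh A) t) (Ioi 0) := by
  refine Integrable.mono' ((integrableOn_rpow_exp (l + 3 / 2) (2 * A / 9)
    (by have : (0 : ℝ) ≤ l := by positivity
        linarith) (by positivity)).const_mul (Cl l)) ?_ ?_
  · refine ContinuousOn.aestronglyMeasurable (fun t ht => ?_) measurableSet_Ioi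
    exact (hh_iter_hasDerivAt A l ht).continuousAt.continuousWithinAt
  · refine (ae_restrict_iff' measurableSet_Ioi).2 (Eventually.of_forall fun t ht => ?_)
    exact hh_iter_bound hA.le ht l

/-- the bound tends to zero at `0+`. -/
lemma bound_tendsto_zero {σ c : ℝ} (hσ : 0 ≤ σ) (hc : 0 < c) :
    Tendsto (fun t : ℝ => t ^ (-σ) * Real.exp (-(c / t))) (𝓝[>] 0) (𝓝 0) := by
  have h1 : Tendsto (fun t : ℝ => ((σ + 1) / c) ^ (σ + 1) * t) (𝓝[>] 0) (𝓝 0) := by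
    have : Tendsto (fun t : ℝ => ((σ + 1) / c) ^ (σ + 1) * t) (𝓝 0)
      (𝓝 (((σ + 1) / c) ^ (σ + 1) * 0)) := Continuous.tendsto (by fun_prop) 0
    rw [mul_zero] at this
    exact this.mono_left nhdsWithin_le_nhds
  refine squeeze_zero' ?_ ?_ h1
  · filter_upwards [self_mem_nhdsWithin] with t ht
    have : 0 < t := ht
    positivity
  · filter_upwards [self_mem_nhdsWithin] with t ht
    have ht : 0 < t := ht
    have := rpow_neg_exp_bound (σ + 1) c (by linarith) hc ht
    have e : t ^ (-σ) = t ^ (-(σ + 1)) * t := by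
      nth_rewrite 3 [← Real.rpow_one t]
      rw [← Real.rpow_add ht]; ring_nf
    rw [e]
    nlinarith

lemma hh_iter_zero {A : ℝ} (hA : 0 < A) (l : ℕ) :
    Tendsto (fun t : ℝ => iteratedDeriv l (hh A) t) (𝓝[>] 0) (𝓝 0) := by
  have := (bound_tendsto_zero (σ := l + 3 / 2) (c := 2 * A / 9) (by positivity)
    (by positivity)).const_mul (Cl l)
  rw [mul_zero] at this
  refine squeeze_zero_norm' ?_ this
  filter_upwards [self_mem_nhdsWithin] with t ht
  exact hh_iter_bound hA.le ht l

lemma hh_iter_bound' {A t : ℝ} (hA : 0 ≤ A) (ht : 0 < t) (l : ℕ) :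
    ‖iteratedDeriv l (hh A) t‖ ≤ Cl l * t ^ (-(l + 3 / 2) : ℝ) := by
  refine (hh_iter_bound hA ht l).trans ?_
  have := Cl_pos l
  refine mul_le_mul_of_nonneg_left ?_ this.le
  refine mul_le_of_le_one_right (by positivity) (Real.exp_le_one_iff.2 ?_)
  have : 0 ≤ 2 * A / 9 / t := by positivity
  linarith

lemma hh_iter_atTop {A : ℝ} (hA : 0 < A) (l : ℕ) :
    Tendsto (fun t : ℝ => iteratedDeriv l (hh A) t) atTop (𝓝 0) := by
  have := (tendsto_rpow_neg_atTop (y := l + 3 / 2) (by positivity)).const_mul (Cl l)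
  rw [mul_zero] at this
  refine squeeze_zero_norm' ?_ this
  filter_upwards [eventually_gt_atTop 0] with t ht
  exact hh_iter_bound' hA.le ht l

lemma LL_succ {A : ℝ} (hA : 0 < A) (l : ℕ) {B : ℂ} (hB : 0 ≤ B.re) :
    LL (fun t : ℝ => iteratedDeriv (l + 1) (hh A) t) B =
      B * LL (fun t : ℝ => iteratedDeriv l (hh A) t) B := by
  have hv : ∀ t ∈ Ioi (0 : ℝ), HasDerivAt (fun t : ℝ => Complex.exp (-(B * t)))
      (-B * Complex.exp (-(B * t))) t := by
    intro t _
    have h : HasDerivAt (fun y : ℂ => -(B * y)) (-B) (t : ℂ) := by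
      simpa using ((hasDerivAt_id (t : ℂ)).const_mul B).fun_neg
    have := h.cexp.comp_ofReal
    rwa [mul_comm] at this
  have hlim : ∀ L : Filter ℝ, (∀ᶠ t in L, 0 < t) →
      Tendsto (fun t : ℝ => iteratedDeriv l (hh A) t) L (𝓝 0) →
      Tendsto ((fun t : ℝ => iteratedDeriv l (hh A) t) * (fun t : ℝ => Complex.exp (-(B * t)))) L
        (𝓝 0) := by
    intro L hL h
    have h0 := h.norm
    rw [norm_zero] at h0
    refine squeeze_zero_norm' ?_ h0
    filter_upwards [hL] with t ht
    rw [Pi.mul_apply, norm_mul]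
    exact mul_le_of_le_one_right (norm_nonneg _) (norm_exp_neg_mul_le hB ht)
  have := integral_Ioi_mul_deriv_eq_deriv_mul (a := (0 : ℝ)) (a' := (0 : ℂ)) (b' := (0 : ℂ))
    (u := fun t : ℝ => iteratedDeriv l (hh A) t) (v := fun t : ℝ => Complex.exp (-(B * t)))
    (fun t ht => hh_iter_hasDerivAt A l ht) hv ?_ ?_ ?_ ?_
  · simp only [sub_zero, zero_sub] at this
    unfold LL
    rw [← neg_eq_iff_eq_neg.2 this, ← integral_const_mul, ← integral_neg]
    congr 1; ext t; ring
  · refine ((LL_integrable (hh_iter_integrable hA l) hB).const_mul (-B)).congr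
      (Eventually.of_forall fun t => ?_)
    simp; ring
  · exact LL_integrable (hh_iter_integrable hA (l + 1)) hB
  · exact hlim _ self_mem_nhdsWithin (hh_iter_zero hA l)
  · exact hlim _ (eventually_gt_atTop 0) (hh_iter_atTop hA l)

lemma LL_iter {A : ℝ} (hA : 0 < A) (l : ℕ) {B : ℂ} (hB : 0 ≤ B.re) :
    LL (fun t : ℝ => iteratedDeriv l (hh A) t) B = B ^ l * LL (fun t : ℝ => hh A t) B := by
  induction l with
  | zero => simp [iteratedDeriv_zero]
  | succ n ih => rw [LL_succ hA n hB, ih]; ring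
end CC

namespace CC
open Filter Topology Set MeasureTheory
open scoped FourierTransform

noncomputable def ee (θ : ℝ) : ℝ := Real.exp (-θ) * Real.cos θ

lemma abs_ee_le (θ : ℝ) : |ee θ| ≤ Real.exp (-θ) := by
  unfold ee
  rw [abs_mul, abs_of_pos (Real.exp_pos _)]
  exact mul_le_of_le_one_right (Real.exp_pos _).le (Real.abs_cos_le_one θ)

/-- `n^j e^{-c√n} ≤ K (n^2)⁻¹`. -/
lemma pow_exp_sqrt_bound (j : ℕ) {c : ℝ} (hc : 0 < c) : ∃ K : ℝ, 0 < K ∧ ∀ u : ℝ, 0 < u →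
    u ^ j * Real.exp (-(c * √u)) ≤ K * (u ^ 2)⁻¹ := by
  refine ⟨((((2 * (j + 2) : ℕ)) : ℝ) / c) ^ (((2 * (j + 2) : ℕ)) : ℝ), by positivity, fun u hu => ?_⟩
  have := rpow_mul_exp_le (σ := ((2 * (j + 2) : ℕ) : ℝ)) (c := c) (u := √u) (by positivity) hc
    (Real.sqrt_nonneg _)
  rw [Real.rpow_natCast (√u), pow_mul, Real.sq_sqrt hu.le] at this
  refine le_trans (le_of_eq ?_) (mul_le_mul_of_nonneg_right this (by positivity : 0 ≤ (u ^ 2)⁻¹))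
  rw [pow_add]
  field_simp

lemma summable_pow_exp_sqrt (j : ℕ) {c : ℝ} (hc : 0 < c) :
    Summable fun n : ℕ => (n : ℝ) ^ j * Real.exp (-(c * √n)) := by
  obtain ⟨K, -, hK⟩ := pow_exp_sqrt_bound j hc
  have hs : Summable fun n : ℕ => K * ((n : ℝ) ^ 2)⁻¹ :=
    (Real.summable_nat_pow_inv.2 (by norm_num)).mul_left K
  rw [← summable_nat_add_iff 1] at hs ⊢
  refine hs.of_nonneg_of_le (fun n => by positivity) fun n => hK _ (by positivity)

noncomputable def FF (l : ℕ) (A : ℝ) (t : ℝ) : ℂ :=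
  if t = 0 then 0 else iteratedDeriv l (hh A) ((|t| : ℝ) : ℂ)

lemma FF_neg (l : ℕ) (A t : ℝ) : FF l A (-t) = FF l A t := by simp [FF]

lemma FF_pos (l : ℕ) (A : ℝ) {t : ℝ} (ht : 0 < t) : FF l A t = iteratedDeriv l (hh A) t := by
  simp [FF, ht.ne', abs_of_pos ht]

lemma FF_continuous (l : ℕ) {A : ℝ} (hA : 0 < A) : Continuous (FF l A) := by
  rw [continuous_iff_continuousAt]
  intro t
  rcases eq_or_ne t 0 with rfl | ht
  · rw [continuousAt_iff_punctured_nhds]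
    have h0 : FF l A 0 = 0 := by simp [FF]
    rw [h0]
    have h1 : Tendsto (fun t : ℝ => |t|) (𝓝[≠] 0) (𝓝[>] 0) := by
      rw [tendsto_nhdsWithin_iff]
      constructor
      · have : Tendsto (fun t : ℝ => |t|) (𝓝 0) (𝓝 |0|) := continuous_abs.tendsto 0
        rw [abs_zero] at this
        exact this.mono_left nhdsWithin_le_nhds
      · filter_upwards [self_mem_nhdsWithin] with t ht
        exact abs_pos.2 ht
    refine ((hh_iter_zero hA l).comp h1).congr' ?_
    filter_upwards [self_mem_nhdsWithin] with t ht
    have ht : t ≠ 0 := ht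
    simp [FF, ht]
  · have h1 : ContinuousAt (fun t : ℝ => iteratedDeriv l (hh A) ((|t| : ℝ) : ℂ)) t :=
      ContinuousAt.comp (f := fun t : ℝ => |t|) (g := fun t : ℝ => iteratedDeriv l (hh A) t)
        (hh_iter_hasDerivAt A l (abs_pos.2 ht)).continuousAt continuous_abs.continuousAt
    refine h1.congr ?_
    filter_upwards [isOpen_ne.mem_nhds ht] with s hs
    have hs : s ≠ 0 := hs
    simp [FF, hs]

lemma FF_decay (l : ℕ) {A : ℝ} (hA : 0 < A) :
    Asymptotics.IsBigO (cocompact ℝ) (FF l A) fun x : ℝ => |x| ^ (-(l + 3 / 2) : ℝ) := by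
  refine Asymptotics.IsBigO.of_bound (Cl l) (Eventually.of_forall fun t => ?_)
  rcases eq_or_ne t 0 with rfl | ht
  · have := Cl_pos l
    simp only [FF, if_true, norm_zero]
    positivity
  · rw [Real.norm_of_nonneg (by positivity)]
    simp only [FF, ht, if_false]
    exact hh_iter_bound' hA.le (abs_pos.2 ht) l

lemma FF_integrableOn_Ioi (l : ℕ) {A : ℝ} (hA : 0 < A) : IntegrableOn (FF l A) (Ioi 0) :=
  (hh_iter_integrable hA l).congr_fun (fun t ht => (FF_pos l A ht).symm) measurableSet_Ioi

lemma FF_fourier (l : ℕ) {A : ℝ} (hA : 0 < A) (ν : ℝ) :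
    𝓕 (FF l A) ν = LL (fun t : ℝ => iteratedDeriv l (hh A) t) (-(2 * Real.pi * ν * Complex.I)) +
      LL (fun t : ℝ => iteratedDeriv l (hh A) t) (2 * Real.pi * ν * Complex.I) := by
  rw [Real.fourier_real_eq_integral_exp_smul]
  have hr : ∀ ν : ℝ, IntegrableOn (fun v : ℝ =>
      Complex.exp (↑(-2 * Real.pi * v * ν) * Complex.I) • FF l A v) (Ioi 0) := by
    intro ν
    have := LL_integrable (FF_integrableOn_Ioi l hA) (B := 2 * Real.pi * ν * Complex.I) (by simp)
    refine this.congr (Eventually.of_forall fun t => ?_)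
    simp only [smul_eq_mul]
    rw [mul_comm]; congr 2; push_cast; ring
  have hl : IntegrableOn (fun v : ℝ =>
      Complex.exp (↑(-2 * Real.pi * v * ν) * Complex.I) • FF l A v) (Iic 0) := by
    have := (hr (-ν))
    rw [← integrableOn_Ici_iff_integrableOn_Ioi] at this
    rw [← neg_zero] at this
    have h2 := this.comp_neg_Iic (c := 0)
    refine h2.congr_fun (fun t _ => ?_) measurableSet_Iic
    show _ • FF l A (-t) = _
    rw [FF_neg]
    congr 3; push_cast; ring
  have e : ∀ ν : ℝ, ∫ v in Ioi (0 : ℝ), Complex.exp (↑(-2 * Real.pi * v * ν) * Complex.I) • FF l A v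
      = LL (fun t : ℝ => iteratedDeriv l (hh A) t) (2 * Real.pi * ν * Complex.I) := by
    intro ν
    unfold LL
    refine setIntegral_congr_fun measurableSet_Ioi fun t ht => ?_
    simp only [smul_eq_mul, FF_pos l A ht]
    rw [mul_comm]; congr 2; push_cast; ring
  rw [← intervalIntegral.integral_Iic_add_Ioi hl (hr ν), e ν]
  congr 1
  have := integral_comp_neg_Ioi 0
    (fun v : ℝ => Complex.exp (↑(-2 * Real.pi * v * ν) * Complex.I) • FF l A v)
  rw [neg_zero] at this
  rw [← this]
  have e2 := e (-ν)
  push_cast at e2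
  have e3 : (2 * Real.pi * -(ν : ℂ) * Complex.I) = -(2 * Real.pi * ν * Complex.I) := by ring
  rw [e3] at e2
  rw [← e2]
  congr 1; ext v
  rw [FF_neg]
  congr 3; push_cast; ring

lemma FF_fourier_even (l : ℕ) {A : ℝ} (hA : 0 < A) (ν : ℝ) :
    𝓕 (FF l A) (-ν) = 𝓕 (FF l A) ν := by
  rw [FF_fourier l hA, FF_fourier l hA, add_comm]
  push_cast
  congr 2 <;> ring

lemma FF_fourier_eq (m : ℕ) {p : ℝ} (hp : 0 < p) {ν : ℝ} (hν : 0 ≤ ν) :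
    𝓕 (FF (2 * m) (p ^ 2)) ν =
      ((2 * (√Real.pi / p) * ((-1) ^ m * (2 * Real.pi) ^ (2 * m) * (ν ^ (2 * m) *
        ee (2 * p * √(Real.pi * ν)))) : ℝ) : ℂ) := by
  have hA : 0 < p ^ 2 := by positivity
  rw [FF_fourier _ hA, LL_iter hA _ (by simp), LL_iter hA _ (by simp)]
  set s := √(Real.pi * ν) with hs
  have hs0 : 0 ≤ s := Real.sqrt_nonneg _
  have hs2 : ((s : ℂ)) ^ 2 = Real.pi * ν := by
    have : s ^ 2 = Real.pi * ν := Real.sq_sqrt (by positivity)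
    exact_mod_cast this
  have e1 : (2 * Real.pi * ν * Complex.I) = ((s : ℂ) * (1 + Complex.I)) ^ 2 := by
    rw [mul_pow, hs2]; ring_nf; rw [Complex.I_sq]; ring
  have e2 : -(2 * Real.pi * ν * Complex.I) = ((s : ℂ) * (1 - Complex.I)) ^ 2 := by
    rw [mul_pow, hs2]; ring_nf; rw [Complex.I_sq]; ring
  have f1 := LL_hh p hp ((s : ℂ) * (1 + Complex.I)) (by simp [abs_of_nonneg hs0])
  have f2 := LL_hh p hp ((s : ℂ) * (1 - Complex.I)) (by simp [abs_of_nonneg hs0])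
  rw [← e1] at f1
  rw [← e2] at f2
  rw [f1, f2]
  have g1 : (2 * Real.pi * ν * Complex.I) ^ (2 * m) = (-1) ^ m * (2 * Real.pi) ^ (2 * m) * ν ^ (2 * m) := by
    rw [mul_pow, mul_pow, pow_mul Complex.I, Complex.I_sq]; ring
  rw [(even_two_mul m).neg_pow, g1]
  have h1 : Complex.exp (-(2 * p * ((s : ℂ) * (1 - Complex.I)))) +
      Complex.exp (-(2 * p * ((s : ℂ) * (1 + Complex.I)))) = 2 * ((ee (2 * p * s) : ℝ) : ℂ) := by
    unfold ee
    push_cast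
    rw [Complex.cos]
    rw [show -(2 * p * ((s : ℂ) * (1 - Complex.I))) = -(2 * p * s) + (2 * p * s) * Complex.I by ring,
      show -(2 * p * ((s : ℂ) * (1 + Complex.I))) = -(2 * p * s) + -(2 * p * s) * Complex.I by ring,
      Complex.exp_add, Complex.exp_add]
    ring
  push_cast at h1 ⊢
  linear_combination ((√Real.pi : ℂ) / p) * ((-1) ^ m * (2 * Real.pi) ^ (2 * m) * ν ^ (2 * m)) * h1

lemma ee_summable (m : ℕ) {p : ℝ} (hp : 0 < p) :
    Summable fun n : ℕ => (n : ℝ) ^ m * ee (2 * p * √(Real.pi * n)) := by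
  have := summable_pow_exp_sqrt m (c := 2 * p * √Real.pi) (by positivity)
  refine this.of_norm_bounded (fun n => ?_)
  rw [norm_mul, Real.norm_of_nonneg (by positivity), Real.norm_eq_abs]
  gcongr
  refine (abs_ee_le _).trans (le_of_eq ?_)
  rw [Real.sqrt_mul Real.pi_pos.le, ← mul_assoc]

lemma FF_fourier_summable (m : ℕ) {p : ℝ} (hp : 0 < p) :
    Summable fun n : ℤ => 𝓕 (FF (2 * m) (p ^ 2)) (n : ℝ) := by
  have h : Summable fun n : ℕ => 𝓕 (FF (2 * m) (p ^ 2)) (n : ℝ) := by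
    simp_rw [FF_fourier_eq m hp (Nat.cast_nonneg _)]
    rw [Complex.summable_ofReal]
    exact (((ee_summable (2 * m) hp).mul_left _).mul_left _)
  refine Summable.of_nat_of_neg (by simpa using h) ?_
  have h2 : ∀ n : ℕ, 𝓕 (FF (2 * m) (p ^ 2)) (((-(n : ℤ)) : ℤ) : ℝ) = 𝓕 (FF (2 * m) (p ^ 2)) (n : ℝ) := by
    intro n; push_cast; exact FF_fourier_even _ (by positivity) _
  simp_rw [h2]; exact h

lemma FF_summable (l : ℕ) {A : ℝ} (hA : 0 < A) : Summable fun n : ℤ => FF l A (n : ℝ) :=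
  summable_of_isBigO (Real.summable_abs_int_rpow (b := l + 3 / 2)
    (by have : (0 : ℝ) ≤ l := by positivity
        linarith))
    ((FF_decay l hA).comp_tendsto Int.tendsto_coe_cofinite)

/-- Poisson summation. -/
lemma poisson (m : ℕ) {p : ℝ} (hp : 0 < p) :
    ∑' k : ℕ+, iteratedDeriv (2 * m) (hh (p ^ 2)) (k : ℂ) = ((√Real.pi / p : ℝ) : ℂ) *
      ((0 : ℂ) ^ (2 * m) + 2 * (-1) ^ m * (2 * Real.pi) ^ (2 * m) *
        ∑' n : ℕ+, (n : ℂ) ^ (2 * m) * ((ee (2 * p * √(Real.pi * n)) : ℝ) : ℂ)) := by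
  have hA : 0 < p ^ 2 := by positivity
  have := Real.tsum_eq_tsum_fourier_of_rpow_decay_of_summable (FF_continuous (2 * m) hA)
    (by have : (0 : ℝ) ≤ (2 * m : ℕ) := by positivity
        linarith) (FF_decay (2 * m) hA) (FF_fourier_summable m hp) 0
  simp only [zero_add, QuotientAddGroup.mk_zero, fourier_eval_zero, mul_one] at this
  rw [tsum_int_eq_zero_add_two_mul_tsum_pnat (fun n => by push_cast; exact FF_neg _ _ _)
      (FF_summable _ hA),
    tsum_int_eq_zero_add_two_mul_tsum_pnat
      (fun n => by push_cast; exact FF_fourier_even _ hA _) (FF_fourier_summable m hp)] at this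
  have e0 : FF (2 * m) (p ^ 2) ((0 : ℤ) : ℝ) = 0 := by simp [FF]
  have e1 : 𝓕 (FF (2 * m) (p ^ 2)) ((0 : ℤ) : ℝ) = 2 * ((√Real.pi / p : ℝ) : ℂ) * 0 ^ (2 * m) := by
    rw [Int.cast_zero, FF_fourier_eq m hp le_rfl]
    rcases m.eq_zero_or_pos with rfl | hm
    · simp [ee]
    · simp [hm.ne']
  have e2 : ∀ k : ℕ+, FF (2 * m) (p ^ 2) (((k : ℕ) : ℤ) : ℝ) =
      iteratedDeriv (2 * m) (hh (p ^ 2)) (k : ℂ) := by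
    intro k
    rw [Int.cast_natCast, FF_pos _ _ (by exact_mod_cast k.pos)]; simp
  have e3 : ∀ k : ℕ+, 𝓕 (FF (2 * m) (p ^ 2)) (((k : ℕ) : ℤ) : ℝ) =
      2 * ((√Real.pi / p : ℝ) : ℂ) * ((-1) ^ m * (2 * Real.pi) ^ (2 * m)) * ((k : ℂ) ^ (2 * m) *
        ((ee (2 * p * √(Real.pi * k)) : ℝ) : ℂ)) := by
    intro k
    rw [Int.cast_natCast, FF_fourier_eq m hp (by positivity)]
    push_cast; ring
  simp only [e0, e1, e2, e3, tsum_mul_left] at this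
  linear_combination this / 2
end CC

namespace CC
open Filter Topology Set MeasureTheory

/-- termwise differentiation -/
lemma iter_hasSum {ι : Type*} {f : ι → ℂ → ℂ} (hf : ∀ i, DifferentiableOn ℂ (f i) RH) {t : ℝ}
    (ht : 0 < t) {u : ι → ℝ} (hu : Summable u)
    (hb : ∀ i, ∀ z : ℂ, ‖z - t‖ ≤ t / 2 → ‖f i z‖ ≤ u i) (l : ℕ) :
    HasSum (fun i => iteratedDeriv l (f i) t) (iteratedDeriv l (fun z => ∑' i, f i z) t) := by
  set B := Metric.ball (t : ℂ) (t / 2) with hB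
  have hBo : IsOpen B := Metric.isOpen_ball
  have hBR : B ⊆ RH := Metric.ball_subset_closedBall.trans (disc_subset ht)
  have htB : (t : ℂ) ∈ B := Metric.mem_ball_self (by positivity)
  have hFd : ∀ s : Finset ι, DifferentiableOn ℂ (fun z => ∑ i ∈ s, f i z) B := fun s =>
    DifferentiableOn.fun_sum fun i _ => (hf i).mono hBR
  have key : TendstoLocallyUniformlyOn
      (fun (s : Finset ι) z => iteratedDeriv l (fun z => ∑ i ∈ s, f i z) z)
      (iteratedDeriv l (fun z => ∑' i, f i z)) atTop B := by
    induction l with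
    | zero =>
      simp only [iteratedDeriv_zero]
      refine (tendstoUniformlyOn_tsum hu ?_).tendstoLocallyUniformlyOn
      intro i z hz
      exact hb i z (by rw [← dist_eq_norm]; exact (Metric.mem_ball.1 hz).le)
    | succ n ih =>
      simp only [iteratedDeriv_succ]
      exact ih.deriv (Eventually.of_forall fun s => iter_diffOn hBo (hFd s) n) hBo
  have h2 := key.tendsto_at htB
  refine h2.congr fun s => ?_
  refine iteratedDeriv_fun_sum fun i _ => ?_
  exact (((hf i).mono hBR).analyticAt (hBo.mem_nhds htB)).contDiffAt

noncomputable def phi (x : ℝ) (j : ℕ) (z : ℂ) : ℂ :=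
  z ^ (-(1 / 2) : ℂ) * ((x / Real.pi) / (x ^ 2 + j ^ 2 * z ^ 2))

lemma phi_den_ne {x : ℝ} (hx : 0 < x) (j : ℕ) {z : ℂ} (hz : 0 < z.re) :
    (x : ℂ) ^ 2 + j ^ 2 * z ^ 2 ≠ 0 := by
  rcases j.eq_zero_or_pos with rfl | hj
  · simp [hx.ne']
  intro h
  have hj' : (0 : ℝ) < j := by exact_mod_cast hj
  have h1 := congrArg Complex.im h
  have h2 := congrArg Complex.re h
  simp only [pow_two, Complex.add_re, Complex.add_im, Complex.mul_re, Complex.mul_im,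
    Complex.ofReal_re, Complex.ofReal_im, Complex.natCast_re, Complex.natCast_im,
    Complex.zero_re, Complex.zero_im] at h1 h2
  ring_nf at h1 h2
  have : z.im = 0 := by
    by_contra hne
    have : (j : ℝ) ^ 2 * z.re * z.im * 2 ≠ 0 := by positivity
    exact this (by linarith)
  rw [this] at h2
  have : 0 < x ^ 2 + (j : ℝ) ^ 2 * z.re ^ 2 := by positivity
  nlinarith

lemma phi_diffOn {x : ℝ} (hx : 0 < x) (j : ℕ) : DifferentiableOn ℂ (phi x j) RH := by
  intro z hz
  refine DifferentiableAt.differentiableWithinAt ?_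
  unfold phi
  refine DifferentiableAt.mul (DifferentiableAt.cpow_const differentiableAt_id (Or.inl hz)) ?_
  exact DifferentiableAt.div (by fun_prop) (by fun_prop) (phi_den_ne hx j hz)

lemma phi_den_bound {x t : ℝ} (ht : 0 < t) (j : ℕ) {z : ℂ} (hz : ‖z - t‖ ≤ t / 2) :
    (j : ℝ) ^ 2 * (t / 2) ^ 2 ≤ ‖(x : ℂ) ^ 2 + j ^ 2 * z ^ 2‖ := by
  obtain ⟨h1, h2, h3, h4⟩ := disc_geom ht hz
  have h5 : ‖(j : ℂ) ^ 2 * z ^ 2‖ ≤ ‖(x : ℂ) ^ 2 + j ^ 2 * z ^ 2‖ := by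
    rw [← sq_le_sq₀ (norm_nonneg _) (norm_nonneg _), Complex.sq_norm, Complex.sq_norm,
      Complex.normSq_apply, Complex.normSq_apply]
    have e1 : ((j : ℂ) ^ 2 * z ^ 2).re = (j : ℝ) ^ 2 * (z.re ^ 2 - z.im ^ 2) := by
      simp [pow_two]
    have e2 : ((x : ℂ) ^ 2).re = x ^ 2 := by simp [pow_two]
    have e3 : ((x : ℂ) ^ 2).im = 0 := by simp [pow_two]
    rw [Complex.add_re, Complex.add_im, e1, e2, e3, zero_add]
    have h6 : 0 ≤ z.re ^ 2 - z.im ^ 2 := by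
      rw [← sq_abs z.im]
      nlinarith [abs_nonneg z.im]
    have h7 : 0 ≤ (j : ℝ) ^ 2 * (z.re ^ 2 - z.im ^ 2) := by positivity
    nlinarith [sq_nonneg x, mul_nonneg (sq_nonneg x) h7]
  refine le_trans ?_ h5
  rw [norm_mul, norm_pow, norm_pow, Complex.norm_natCast]
  gcongr

lemma phi_disc_bound {x t : ℝ} (hx : 0 < x) (ht : 0 < t) {j : ℕ} (hj : 0 < j) {z : ℂ}
    (hz : ‖z - t‖ ≤ t / 2) :
    ‖phi x j z‖ ≤ (t / 2) ^ (-(1 / 2) : ℝ) * ((x / Real.pi) / ((j : ℝ) ^ 2 * (t / 2) ^ 2)) := by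
  unfold phi
  have h1 := cpow_disc_bound (r := 1 / 2) (by norm_num) ht hz
  push_cast at h1
  rw [norm_mul, norm_div]
  have hj' : (0 : ℝ) < j := by exact_mod_cast hj
  have e : ‖(x : ℂ) / Real.pi‖ = x / Real.pi := by
    rw [← Complex.ofReal_div, Complex.norm_real, Real.norm_of_nonneg (by positivity)]
  rw [e]
  exact mul_le_mul h1 (div_le_div_of_nonneg_left (by positivity) (by positivity)
    (phi_den_bound ht j hz)) (by positivity) (by positivity)

lemma phi_iter_bound {x : ℝ} (hx : 0 < x) (l : ℕ) : ∃ C : ℝ, 0 < C ∧ ∀ (j : ℕ), 0 < j →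
    ∀ t : ℝ, 0 < t → ‖iteratedDeriv l (phi x j) t‖ ≤ C * ((j : ℝ) ^ 2)⁻¹ * t ^ (-(l + 5 / 2) : ℝ) := by
  refine ⟨l.factorial * (x / Real.pi) * (1 / 2 : ℝ) ^ (-(l + 5 / 2) : ℝ), by positivity, fun j hj t ht => ?_⟩
  refine (cauchy_bound (phi_diffOn hx j) ht l fun z hz => phi_disc_bound hx ht hj hz).trans
    (le_of_eq ?_)
  have hj' : (0 : ℝ) < j := by exact_mod_cast hj
  have e : t ^ (-(l + 5 / 2) : ℝ) * (1 / 2 : ℝ) ^ (-(l + 5 / 2) : ℝ) =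
      (t / 2) ^ (-(1 / 2) : ℝ) / (t / 2) ^ 2 / (t / 2) ^ l := by
    rw [← Real.mul_rpow ht.le (by norm_num), mul_one_div, ← Real.rpow_natCast, ← Real.rpow_natCast,
      ← Real.rpow_sub (by positivity), ← Real.rpow_sub (by positivity)]
    congr 1; push_cast; ring
  calc _ = l.factorial * (x / Real.pi) * ((j : ℝ) ^ 2)⁻¹ *
        ((t / 2) ^ (-(1 / 2) : ℝ) / (t / 2) ^ 2 / (t / 2) ^ l) := by
        field_simp
    _ = _ := by rw [← e]; ring

lemma pf_aux {u : ℂ} (hu : 0 < u.re) :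
    ∑' b : ℕ+, Complex.exp (-(2 * Real.pi * u)) ^ (b : ℕ) =
      1 / (2 * Real.pi * u) - 1 / 2 + ∑' j : ℕ+, (u / Real.pi) / (u ^ 2 + j ^ 2) := by
  have hu0 : u ≠ 0 := by rintro rfl; simp at hu
  have him : 0 < (Complex.I * u).im := by simpa using hu
  have h1 : Real.pi * Complex.cot (Real.pi * (Complex.I * u)) = Real.pi * Complex.I -
      2 * Real.pi * Complex.I * ∑' n : ℕ, Complex.exp (2 * Real.pi * Complex.I * (Complex.I * u)) ^ n :=
    pi_mul_cot_pi_q_exp ⟨Complex.I * u, him⟩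
  have h2 := cot_series_rep (x := Complex.I * u)
    (UpperHalfPlane.coe_mem_integerComplement ⟨Complex.I * u, him⟩)
  rw [h2] at h1
  have e0 : 2 * Real.pi * Complex.I * (Complex.I * u) = -(2 * Real.pi * u) := by
    linear_combination 2 * Real.pi * u * Complex.I_sq
  rw [e0] at h1
  have hlt : ‖Complex.exp (-(2 * Real.pi * u))‖ < 1 := by
    rw [Complex.norm_exp, Real.exp_lt_one_iff]
    simp
    positivity
  have e5 := tsum_zero_pnat_eq_tsum_nat (f := fun n : ℕ => Complex.exp (-(2 * Real.pi * u)) ^ n)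
    (summable_geometric_of_norm_lt_one hlt)
  rw [← e5] at h1
  have e1 : ∀ j : ℕ+, 1 / (Complex.I * u - j) + 1 / (Complex.I * u + j) =
      (-2 * Complex.I * Real.pi) * ((u / Real.pi) / (u ^ 2 + j ^ 2)) := by
    intro j
    have n1 : Complex.I * u - (j : ℂ) ≠ 0 := by
      intro h; have := congrArg Complex.im h; simp at this; linarith
    have n2 : Complex.I * u + (j : ℂ) ≠ 0 := by
      intro h; have := congrArg Complex.im h; simp at this; linarith
    have n3 : u ^ 2 + (j : ℂ) ^ 2 = - ((Complex.I * u - j) * (Complex.I * u + j)) := by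
      linear_combination u ^ 2 * Complex.I_sq
    have hpi : (Real.pi : ℂ) ≠ 0 := by exact_mod_cast Real.pi_ne_zero
    rw [n3]
    field_simp
    ring
  simp only [e1, tsum_mul_left, pow_zero] at h1
  have hpi : (Real.pi : ℂ) ≠ 0 := by exact_mod_cast Real.pi_ne_zero
  have hI := Complex.I_ne_zero
  have e2 : 1 / (Complex.I * u) = -Complex.I / u := by
    rw [one_div, mul_inv, Complex.inv_I]; rfl
  rw [e2] at h1
  set S := ∑' b : ℕ+, Complex.exp (-(2 * Real.pi * u)) ^ (b : ℕ)
  set T := ∑' j : ℕ+, (u / Real.pi) / (u ^ 2 + j ^ 2)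
  have h3 : (-2 * Complex.I * Real.pi) * S = (-2 * Complex.I * Real.pi) *
      (1 / (2 * Real.pi * u) - 1 / 2 + T) := by
    have : (-2 * Complex.I * Real.pi) * (1 / (2 * Real.pi * u)) = -Complex.I / u := by
      field_simp
    linear_combination -h1 - this
  exact mul_left_cancel₀ (by simp [hpi]) h3

lemma pf {x : ℝ} (hx : 0 < x) {z : ℂ} (hz : 0 < z.re) :
    ∑' b : ℕ+, hh (2 * Real.pi * b * x) z =
      (1 / (2 * Real.pi * x)) * z ^ (-(1 / 2) : ℂ) - 1 / 2 * z ^ (-(3 / 2) : ℂ) +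
        ∑' j : ℕ+, phi x j z := by
  have hz0 : z ≠ 0 := by rintro rfl; simp at hz
  have hx0 : (x : ℂ) ≠ 0 := by exact_mod_cast hx.ne'
  have hpi : (Real.pi : ℂ) ≠ 0 := by exact_mod_cast Real.pi_ne_zero
  have hu : 0 < ((x : ℂ) / z).re := by
    rw [div_eq_mul_inv, Complex.re_ofReal_mul, Complex.inv_re]
    have := Complex.normSq_pos.2 hz0
    positivity
  have h := pf_aux hu
  have e1 : ∀ b : ℕ+, hh (2 * Real.pi * b * x) z = z ^ (-(3 / 2) : ℂ) *
      Complex.exp (-(2 * Real.pi * (x / z))) ^ (b : ℕ) := by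
    intro b
    unfold hh
    rw [← Complex.exp_nat_mul]
    congr 2; push_cast; ring
  have e2 : z ^ (-(1 / 2) : ℂ) = z ^ (-(3 / 2) : ℂ) * z := by
    nth_rewrite 3 [← Complex.cpow_one z]
    rw [← Complex.cpow_add _ _ hz0]; congr 1; norm_num
  have e3 : ∀ j : ℕ+, phi x j z = z ^ (-(3 / 2) : ℂ) * ((x / z / Real.pi) / ((x / z) ^ 2 + j ^ 2)) := by
    intro j
    unfold phi
    have := phi_den_ne hx j hz
    rw [e2, mul_assoc]
    have e4 : ((x : ℂ) / z) ^ 2 + (j : ℂ) ^ 2 = (x ^ 2 + ((j : ℕ) : ℂ) ^ 2 * z ^ 2) / z ^ 2 := by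
      field_simp
    rw [e4]
    field_simp
  simp only [e1, e3, tsum_mul_left, h]
  rw [e2]
  field_simp
end CC

namespace CC
open Filter Topology Set MeasureTheory

lemma iter_hasSum_ball {ι : Type*} {f : ι → ℂ → ℂ} {t : ℂ} {ρ : ℝ} (hρ : 0 < ρ)
    (hf : ∀ i, DifferentiableOn ℂ (f i) (Metric.ball t ρ))
    {u : ι → ℝ} (hu : Summable u)
    (hb : ∀ i, ∀ z ∈ Metric.ball t ρ, ‖f i z‖ ≤ u i) (l : ℕ) :
    HasSum (fun i => iteratedDeriv l (f i) t) (iteratedDeriv l (fun z => ∑' i, f i z) t) := by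
  set B := Metric.ball t ρ with hB
  have hBo : IsOpen B := Metric.isOpen_ball
  have htB : t ∈ B := Metric.mem_ball_self hρ
  have hFd : ∀ s : Finset ι, DifferentiableOn ℂ (fun z => ∑ i ∈ s, f i z) B := fun s =>
    DifferentiableOn.fun_sum fun i _ => hf i
  have key : TendstoLocallyUniformlyOn
      (fun (s : Finset ι) z => iteratedDeriv l (fun z => ∑ i ∈ s, f i z) z)
      (iteratedDeriv l (fun z => ∑' i, f i z)) atTop B := by
    induction l with
    | zero =>
      simp only [iteratedDeriv_zero]
      exact (tendstoUniformlyOn_tsum hu hb).tendstoLocallyUniformlyOn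
    | succ n ih =>
      simp only [iteratedDeriv_succ]
      exact ih.deriv (Eventually.of_forall fun s => iter_diffOn hBo (hFd s) n) hBo
  have h2 := key.tendsto_at htB
  refine h2.congr fun s => ?_
  refine iteratedDeriv_fun_sum fun i _ => ?_
  exact ((hf i).analyticAt (hBo.mem_nhds htB)).contDiffAt

/-- falling factorial -/
noncomputable def ff (s : ℂ) (l : ℕ) : ℂ := ∏ i ∈ Finset.range l, (s - i)

lemma ff_succ (s : ℂ) (l : ℕ) : ff s (l + 1) = ff s l * (s - l) := Finset.prod_range_succ _ _

lemma ff_succ' (s : ℂ) (l : ℕ) : ff (s + 1) (l + 1) = (s + 1) * ff s l := by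
  unfold ff
  rw [Finset.prod_range_succ', mul_comm]
  simp

lemma ff_two (s : ℂ) (l : ℕ) :
    ff (s + 2) l * ((s + 2 - l) * (s + 1 - l)) = (s + 2) * (s + 1) * ff s l := by
  have h1 : ff (s + 2) (l + 2) = ff (s + 2) l * ((s + 2 - l) * (s + 1 - l)) := by
    rw [ff_succ, ff_succ]; push_cast; ring
  have h2 : ff (s + 2) (l + 2) = (s + 2) * (s + 1) * ff s l := by
    have := ff_succ' (s + 1) (l + 1)
    rw [ff_succ' s] at this
    rw [show s + 2 = s + 1 + 1 by ring, this]; ring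
  rw [← h1, h2]

lemma ff_gamma (s : ℝ) (hs : 0 < s) (l : ℕ) :
    (-1 : ℂ) ^ l * ff (-s) l * ((Real.Gamma s : ℝ) : ℂ) = ((Real.Gamma (s + l) : ℝ) : ℂ) := by
  induction l with
  | zero => simp [ff]
  | succ n ih =>
    have : Real.Gamma (s + (n + 1 : ℕ)) = (s + n) * Real.Gamma (s + n) := by
      rw [← Real.Gamma_add_one (by positivity)]; congr 1; push_cast; ring
    rw [this]
    push_cast
    rw [← ih, ff_succ, pow_succ]
    ring

lemma ff_half (m : ℕ) : ff (-(1 / 2)) (2 * m) = ((Real.Gamma (2 * m + 1 / 2) / √Real.pi : ℝ) : ℂ) := by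
  have := ff_gamma (1 / 2) (by norm_num) (2 * m)
  rw [(even_two_mul m).neg_one_pow, one_mul, Real.Gamma_one_half_eq] at this
  push_cast at this ⊢
  rw [eq_div_iff (by simp [Real.pi_pos.le, Real.pi_ne_zero])]
  rw [this]; congr 2; ring

lemma iter_cpow (s : ℂ) (l : ℕ) {z : ℂ} (hz : 0 < z.re) :
    iteratedDeriv l (fun z : ℂ => z ^ s) z = ff s l * z ^ (s - l) := by
  induction l generalizing z with
  | zero => simp [ff]
  | succ n ih =>
    rw [iteratedDeriv_succ]
    have : iteratedDeriv n (fun z : ℂ => z ^ s) =ᶠ[𝓝 z] fun z => ff s n * z ^ (s - n) := by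
      filter_upwards [RH_open.mem_nhds (show z ∈ RH from hz)] with w hw using ih hw
    rw [this.deriv_eq]
    have h := ((hasDerivAt_id z).cpow_const (c := s - n) (Or.inl hz)).const_mul (ff s n)
    simp only [id] at h
    rw [h.deriv, ff_succ]
    push_cast
    rw [show s - (n + 1) = s - n - 1 by ring]
    ring

lemma cpow_diffAt (s : ℂ) {z : ℂ} (hz : 0 < z.re) : DifferentiableAt ℂ (fun z : ℂ => z ^ s) z :=
  DifferentiableAt.cpow_const differentiableAt_id (Or.inl hz)

lemma iter_cpow_const (c s : ℂ) (l : ℕ) {z : ℂ} (hz : 0 < z.re) :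
    iteratedDeriv l (fun z : ℂ => c * z ^ s) z = c * (ff s l * z ^ (s - l)) := by
  rw [iteratedDeriv_const_mul_field, iter_cpow s l hz]

lemma poch_succ (a : ℂ) (k : ℕ) : poch a (k + 1) = poch a k * (a + k) := Finset.prod_range_succ _ _

lemma poch_one (k : ℕ) : poch 1 k = (k.factorial : ℂ) := by
  induction k with
  | zero => simp [poch]
  | succ n ih => rw [poch_succ, ih, Nat.factorial_succ]; push_cast; ring

/-- quarter minus integers never vanish -/
lemma quarter_ne (a : ℤ) : (1 / 4 + a : ℂ) ≠ 0 ∧ (3 / 4 + a : ℂ) ≠ 0 := by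
  constructor
  · intro h
    have : (1 + 4 * a : ℂ) = 0 := by linear_combination 4 * h
    have h2 : (1 + 4 * a : ℤ) = 0 := by exact_mod_cast this
    omega
  · intro h
    have : (3 + 4 * a : ℂ) = 0 := by linear_combination 4 * h
    have h2 : (3 + 4 * a : ℤ) = 0 := by exact_mod_cast this
    omega

lemma poch_quarter_ne (a : ℤ) (k : ℕ) : poch (1 / 4 + a) k ≠ 0 ∧ poch (3 / 4 + a) k ≠ 0 := by
  constructor <;>
  · refine Finset.prod_ne_zero_iff.2 fun i _ => ?_
    have := quarter_ne (a + i)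
    push_cast at this
    first | (rw [add_assoc]; exact this.1) | (rw [add_assoc]; exact this.2)

lemma coef1 (m i : ℕ) : ff (2 * i - 1 / 2) (2 * m) = ff (-(1 / 2)) (2 * m) *
    (poch (1 / 4) i * poch (3 / 4) i / (poch (1 / 4 - m) i * poch (3 / 4 - m) i)) := by
  induction i with
  | zero => simp [poch]
  | succ n ih =>
    have h := ff_two (2 * n - 1 / 2) (2 * m)
    have h1 := poch_quarter_ne (-m) n
    have h2 := quarter_ne (-m + n)
    push_cast at h1 h2 h
    rw [← sub_eq_add_neg, ← sub_eq_add_neg] at h1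
    rw [ih] at h
    push_cast
    rw [poch_succ, poch_succ, poch_succ, poch_succ,
      show (2 * ((n : ℂ) + 1) - 1 / 2) = 2 * n - 1 / 2 + 2 by ring]
    have n1 : (1 / 4 - m + n : ℂ) ≠ 0 := by
      intro h; exact h2.1 (by linear_combination h)
    have n2 : (3 / 4 - m + n : ℂ) ≠ 0 := by
      intro h; exact h2.2 (by linear_combination h)
    have n3 : (2 * (n : ℂ) - 1 / 2 + 2 - 2 * m) * (2 * n - 1 / 2 + 1 - 2 * m) ≠ 0 := by
      have : (2 * (n : ℂ) - 1 / 2 + 2 - 2 * m) * (2 * n - 1 / 2 + 1 - 2 * m) =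
        4 * ((1 / 4 - m + n : ℂ) * (3 / 4 - m + n : ℂ)) := by ring
      rw [this]
      exact mul_ne_zero (by norm_num) (mul_ne_zero n1 n2)
    refine mul_right_cancel₀ n3 (h.trans ?_)
    obtain ⟨p1, p2⟩ := h1
    generalize poch (1 / 4 - (m : ℂ)) n = A1 at *
    generalize poch (3 / 4 - (m : ℂ)) n = A2 at *
    rw [show (2 * (n : ℂ) - 1 / 2 + 2 - 2 * m) * (2 * n - 1 / 2 + 1 - 2 * m) =
        4 * ((1 / 4 - m + n : ℂ) * (3 / 4 - m + n : ℂ)) by ring]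
    generalize hB1 : (1 / 4 - m + n : ℂ) = B1 at *
    generalize hB2 : (3 / 4 - m + n : ℂ) = B2 at *
    field_simp
    ring

lemma coef2 (m i : ℕ) : ff (-(1 / 2) - 2 * i) (2 * m) = ff (-(1 / 2)) (2 * m) *
    (poch (1 / 4 + m) i * poch (3 / 4 + m) i / (poch (1 / 4) i * poch (3 / 4) i)) := by
  induction i with
  | zero => simp [poch]
  | succ n ih =>
    have h := ff_two (-(1 / 2) - 2 * n - 2) (2 * m)
    have h1 := poch_quarter_ne 0 n
    have h2 := quarter_ne n
    push_cast at h1 h2 h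
    simp only [add_zero] at h1
    rw [show -(1 / 2 : ℂ) - 2 * n - 2 + 2 = -(1 / 2) - 2 * n by ring, ih] at h
    push_cast
    rw [poch_succ, poch_succ, poch_succ, poch_succ,
      show (-(1 / 2 : ℂ) - 2 * ((n : ℂ) + 1)) = -(1 / 2) - 2 * n - 2 by ring]
    have n3 : (-(1 / 2 : ℂ) - 2 * n) * (-(1 / 2) - 2 * n - 2 + 1) ≠ 0 := by
      have : (-(1 / 2 : ℂ) - 2 * n) * (-(1 / 2) - 2 * n - 2 + 1) =
        4 * ((1 / 4 + n : ℂ) * (3 / 4 + n : ℂ)) := by ring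
      rw [this]
      have a1 := h2.1
      have a2 := h2.2
      exact mul_ne_zero (by norm_num) (mul_ne_zero a1 a2)
    refine mul_left_cancel₀ n3 (h.symm.trans ?_)
    obtain ⟨p1, p2⟩ := h1
    obtain ⟨n1, n2⟩ := h2
    rw [show (-(1 / 2 : ℂ) - 2 * n) * (-(1 / 2) - 2 * n - 2 + 1) =
        4 * ((1 / 4 + n : ℂ) * (3 / 4 + n : ℂ)) by ring]
    generalize poch (1 / 4 : ℂ) n = A1 at *
    generalize poch (3 / 4 : ℂ) n = A2 at *
    generalize hB1 : (1 / 4 + n : ℂ) = B1 at *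
    generalize hB2 : (3 / 4 + n : ℂ) = B2 at *
    field_simp
    ring
end CC

namespace CC
open Filter Topology Set MeasureTheory

lemma phi_series1 {x : ℝ} (hx : 0 < x) {j : ℕ} {z : ℂ} (hz : 0 < z.re)
    (h : j * ‖z‖ < x) :
    phi x j z = ∑' i : ℕ, (1 / (Real.pi * x)) * ((-1) ^ i * (j / x : ℂ) ^ (2 * i)) *
      z ^ (2 * i - 1 / 2 : ℂ) := by
  have hz0 : z ≠ 0 := by rintro rfl; simp at hz
  have hx0 : (x : ℂ) ≠ 0 := by exact_mod_cast hx.ne'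
  have hpi : (Real.pi : ℂ) ≠ 0 := by exact_mod_cast Real.pi_ne_zero
  have hd := phi_den_ne hx j hz
  have hn : ‖-((j * z / x : ℂ) ^ 2)‖ < 1 := by
    rw [norm_neg, norm_pow, norm_div, norm_mul, Complex.norm_natCast, Complex.norm_real,
      Real.norm_of_nonneg hx.le]
    have : j * ‖z‖ / x < 1 := by rwa [div_lt_one hx]
    exact pow_lt_one₀ (by positivity) this (by norm_num)
  have e : ∀ i : ℕ, (1 / (Real.pi * x)) * ((-1) ^ i * (j / x : ℂ) ^ (2 * i)) *
      z ^ (2 * i - 1 / 2 : ℂ) = (1 / (Real.pi * x)) * z ^ (-(1 / 2) : ℂ) * (-((j * z / x : ℂ) ^ 2)) ^ i := by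
    intro i
    have : z ^ (2 * i - 1 / 2 : ℂ) = z ^ (-(1 / 2) : ℂ) * z ^ (2 * i) := by
      rw [← Complex.cpow_natCast, ← Complex.cpow_add _ _ hz0]; congr 1; push_cast; ring
    rw [this, neg_pow ((j * z / x : ℂ) ^ 2), ← pow_mul, mul_div_right_comm, mul_pow]
    ring
  simp only [e, tsum_mul_left, tsum_geometric_of_norm_lt_one hn]
  unfold phi
  have hd2 : 1 - -((j * z / x : ℂ) ^ 2) = (x ^ 2 + j ^ 2 * z ^ 2) / x ^ 2 := by field_simp; ring
  rw [hd2]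
  field_simp

lemma phi_series2 {x : ℝ} (hx : 0 < x) {j : ℕ} {z : ℂ} (hz : 0 < z.re)
    (h : x < j * ‖z‖) :
    phi x j z = ∑' i : ℕ, (1 / (Real.pi * x)) * ((-1) ^ i * (x / j : ℂ) ^ (2 * (i + 1))) *
      z ^ (-(1 / 2) - 2 * (i + 1 : ℕ) : ℂ) := by
  have hz0 : z ≠ 0 := by rintro rfl; simp at hz
  have hx0 : (x : ℂ) ≠ 0 := by exact_mod_cast hx.ne'
  have hj : (j : ℂ) ≠ 0 := by
    intro h0
    have : (j : ℝ) = 0 := by exact_mod_cast h0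
    rw [this] at h; linarith
  have hpi : (Real.pi : ℂ) ≠ 0 := by exact_mod_cast Real.pi_ne_zero
  have hd := phi_den_ne hx j hz
  have hn : ‖-((x / (j * z) : ℂ) ^ 2)‖ < 1 := by
    rw [norm_neg, norm_pow, norm_div, norm_mul, Complex.norm_natCast, Complex.norm_real,
      Real.norm_of_nonneg hx.le]
    have : x / (j * ‖z‖) < 1 := by rwa [div_lt_one (hx.trans h)]
    exact pow_lt_one₀ (by positivity) this (by norm_num)
  have e : ∀ i : ℕ, (1 / (Real.pi * x)) * ((-1) ^ i * (x / j : ℂ) ^ (2 * (i + 1))) *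
      z ^ (-(1 / 2) - 2 * (i + 1 : ℕ) : ℂ) = (1 / (Real.pi * x)) * z ^ (-(1 / 2) : ℂ) *
        (x / (j * z)) ^ 2 * (-((x / (j * z) : ℂ) ^ 2)) ^ i := by
    intro i
    have : z ^ (-(1 / 2) - 2 * (i + 1 : ℕ) : ℂ) = z ^ (-(1 / 2) : ℂ) * (z⁻¹) ^ (2 * (i + 1)) := by
      rw [inv_pow, ← Complex.cpow_natCast, ← Complex.cpow_neg, ← Complex.cpow_add _ _ hz0]
      congr 1; push_cast; ring
    rw [this, neg_pow ((x / (j * z) : ℂ) ^ 2), ← pow_mul]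
    have e2 : (x / (j * z) : ℂ) = x / j * z⁻¹ := by field_simp
    rw [e2, mul_pow, mul_pow]
    ring
  simp only [e, tsum_mul_left, tsum_geometric_of_norm_lt_one hn]
  unfold phi
  have hd2 : 1 - -((x / (j * z) : ℂ) ^ 2) = (x ^ 2 + j ^ 2 * z ^ 2) / (j * z) ^ 2 := by
    field_simp; ring
  rw [hd2]
  field_simp

/-- common prefactor identity for case 1 -/
lemma phi_iter1 (m : ℕ) {x : ℝ} (hx : 0 < x) {j : ℕ} (hj : 0 < j) {k : ℝ} (hk : 0 < k)
    (h : j * k < x) :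
    HasSum (fun i : ℕ => (1 / (Real.pi * x)) * ((-1) ^ i * (j / x : ℂ) ^ (2 * i)) *
      (ff (2 * i - 1 / 2) (2 * m) * (k : ℂ) ^ (2 * i - 1 / 2 - (2 * m : ℕ) : ℂ)))
      (iteratedDeriv (2 * m) (phi x j) k) := by
  have hj' : (0 : ℝ) < j := by exact_mod_cast hj
  have hkx : k < x / j := by rw [lt_div_iff₀ hj']; linarith
  set ρ := min (k / 2) ((x / j - k) / 2) with hρ
  have hρ0 : 0 < ρ := lt_min (by positivity) (by linarith)
  have hR : j * (k + ρ) < x := by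
    have : ρ ≤ (x / j - k) / 2 := min_le_right _ _
    have : k + ρ < x / j := by linarith
    rw [lt_div_iff₀ hj'] at this; linarith
  have hball : ∀ z ∈ Metric.ball (k : ℂ) ρ, ‖z - k‖ ≤ k / 2 ∧ ‖z‖ ≤ k + ρ := by
    intro z hz
    rw [mem_ball_iff_norm] at hz
    refine ⟨hz.le.trans (min_le_left _ _), ?_⟩
    have h3 : ‖z‖ ≤ ‖z - k‖ + ‖(k : ℂ)‖ := by simpa using norm_add_le (z - k) (k : ℂ)
    rw [Complex.norm_real, Real.norm_of_nonneg hk.le] at h3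
    linarith
  have hre : ∀ z ∈ Metric.ball (k : ℂ) ρ, 0 < z.re := fun z hz => by
    have := (disc_geom hk (hball z hz).1).1
    linarith
  have hq : (j * (k + ρ) / x) ^ 2 < 1 := pow_lt_one₀ (by positivity) (by rwa [div_lt_one hx]) (by norm_num)
  have := iter_hasSum_ball (f := fun i : ℕ => fun z : ℂ => (1 / (Real.pi * x)) *
      ((-1) ^ i * (j / x : ℂ) ^ (2 * i)) * z ^ (2 * i - 1 / 2 : ℂ)) hρ0
    (u := fun i : ℕ => 1 / (Real.pi * x) * (k / 2) ^ (-(1 / 2) : ℝ) * ((j * (k + ρ) / x) ^ 2) ^ i)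
    (fun i z hz => ((cpow_diffAt _ (hre z hz)).const_mul _).differentiableWithinAt)
    ((summable_geometric_of_lt_one (by positivity) hq).mul_left _)
    (fun i z hz => by
      have hz0 : z ≠ 0 := by rintro rfl; simpa using hre _ hz
      have e : z ^ (2 * i - 1 / 2 : ℂ) = z ^ (-(1 / 2) : ℂ) * z ^ (2 * i) := by
        rw [← Complex.cpow_natCast, ← Complex.cpow_add _ _ hz0]; congr 1; push_cast; ring
      have h1 := cpow_disc_bound (r := 1 / 2) (by norm_num) hk (hball z hz).1
      push_cast at h1
      have e2 : ‖(1 / (Real.pi * x : ℂ))‖ = 1 / (Real.pi * x) := by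
        rw [← Complex.ofReal_mul, ← Complex.ofReal_one, ← Complex.ofReal_div, Complex.norm_real,
          Real.norm_of_nonneg (by positivity)]
      have e3 : ‖(j / x : ℂ)‖ = j / x := by
        rw [norm_div, Complex.norm_natCast, Complex.norm_real, Real.norm_of_nonneg hx.le]
      rw [e, norm_mul, norm_mul, norm_mul, norm_mul, e2, norm_pow, norm_neg, norm_one, one_pow, one_mul,
        norm_pow, norm_pow, e3]
      calc _ = 1 / (Real.pi * x) * ‖z ^ (-(1 / 2) : ℂ)‖ * ((j * ‖z‖ / x) ^ 2) ^ i := by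
            rw [← pow_mul, mul_div_right_comm, mul_pow]; ring
        _ ≤ _ := by
            gcongr
            exact (hball z hz).2)
    (2 * m)
  have e4 : iteratedDeriv (2 * m) (phi x j) k = iteratedDeriv (2 * m) (fun z : ℂ => ∑' i : ℕ,
      (1 / (Real.pi * x)) * ((-1) ^ i * (j / x : ℂ) ^ (2 * i)) * z ^ (2 * i - 1 / 2 : ℂ)) k := by
    refine Filter.EventuallyEq.iteratedDeriv_eq _ ?_
    filter_upwards [Metric.ball_mem_nhds (k : ℂ) hρ0] with z hz
    refine phi_series1 hx (hre z hz) (lt_of_le_of_lt ?_ hR)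
    gcongr
    exact (hball z hz).2
  rw [e4]
  refine this.congr_fun fun i => ?_
  rw [iter_cpow_const _ _ _ (by simpa using hk)]

lemma phi_iter2 (m : ℕ) {x : ℝ} (hx : 0 < x) {j : ℕ} (hj : 0 < j) {k : ℝ} (hk : 0 < k)
    (h : x < j * k) :
    HasSum (fun i : ℕ => (1 / (Real.pi * x)) * ((-1) ^ i * (x / j : ℂ) ^ (2 * (i + 1))) *
      (ff (-(1 / 2) - 2 * (i + 1 : ℕ)) (2 * m) * (k : ℂ) ^ (-(1 / 2) - 2 * (i + 1 : ℕ) - (2 * m : ℕ) : ℂ)))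
      (iteratedDeriv (2 * m) (phi x j) k) := by
  have hj' : (0 : ℝ) < j := by exact_mod_cast hj
  have hkx : x / j < k := by rw [div_lt_iff₀ hj']; linarith
  set ρ := min (k / 2) ((k - x / j) / 2) with hρ
  have hρ0 : 0 < ρ := lt_min (by positivity) (by linarith)
  have hR : x < j * (k - ρ) := by
    have : ρ ≤ (k - x / j) / 2 := min_le_right _ _
    have : x / j < k - ρ := by linarith
    rw [div_lt_iff₀ hj'] at this; linarith
  have hR0 : 0 < k - ρ := by
    have : ρ ≤ k / 2 := min_le_left _ _
    linarith
  have hball : ∀ z ∈ Metric.ball (k : ℂ) ρ, ‖z - k‖ ≤ k / 2 ∧ k - ρ ≤ ‖z‖ := by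
    intro z hz
    rw [mem_ball_iff_norm] at hz
    refine ⟨hz.le.trans (min_le_left _ _), ?_⟩
    have h3 : ‖(k : ℂ)‖ ≤ ‖(k : ℂ) - z‖ + ‖z‖ := by simpa using norm_add_le (k - z : ℂ) z
    rw [Complex.norm_real, Real.norm_of_nonneg hk.le, norm_sub_rev] at h3
    linarith
  have hre : ∀ z ∈ Metric.ball (k : ℂ) ρ, 0 < z.re := fun z hz => by
    have := (disc_geom hk (hball z hz).1).1
    linarith
  have hq : (x / (j * (k - ρ))) ^ 2 < 1 :=
    pow_lt_one₀ (by positivity) (by rwa [div_lt_one (by positivity)]) (by norm_num)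
  have := iter_hasSum_ball (f := fun i : ℕ => fun z : ℂ => (1 / (Real.pi * x)) *
      ((-1) ^ i * (x / j : ℂ) ^ (2 * (i + 1))) * z ^ (-(1 / 2) - 2 * (i + 1 : ℕ) : ℂ)) hρ0
    (u := fun i : ℕ => 1 / (Real.pi * x) * (k / 2) ^ (-(1 / 2) : ℝ) * ((x / (j * (k - ρ))) ^ 2) ^ (i + 1))
    (fun i z hz => ((cpow_diffAt _ (hre z hz)).const_mul _).differentiableWithinAt)
    (((summable_nat_add_iff 1).2 (summable_geometric_of_lt_one (by positivity) hq)).mul_left _)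
    (fun i z hz => by
      have hz0 : z ≠ 0 := by rintro rfl; simpa using hre _ hz
      have e : z ^ (-(1 / 2) - 2 * (i + 1 : ℕ) : ℂ) = z ^ (-(1 / 2) : ℂ) * (z⁻¹) ^ (2 * (i + 1)) := by
        rw [inv_pow, ← Complex.cpow_natCast, ← Complex.cpow_neg, ← Complex.cpow_add _ _ hz0]
        congr 1; push_cast; ring
      have h1 := cpow_disc_bound (r := 1 / 2) (by norm_num) hk (hball z hz).1
      push_cast at h1
      have e2 : ‖(1 / (Real.pi * x : ℂ))‖ = 1 / (Real.pi * x) := by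
        rw [← Complex.ofReal_mul, ← Complex.ofReal_one, ← Complex.ofReal_div, Complex.norm_real,
          Real.norm_of_nonneg (by positivity)]
      have e3 : ‖(x / j : ℂ)‖ = x / j := by
        rw [norm_div, Complex.norm_natCast, Complex.norm_real, Real.norm_of_nonneg hx.le]
      rw [e, norm_mul, norm_mul, norm_mul, norm_mul, e2, norm_pow, norm_neg, norm_one, one_pow, one_mul,
        norm_pow, norm_pow, e3, norm_inv]
      calc _ = 1 / (Real.pi * x) * ‖z ^ (-(1 / 2) : ℂ)‖ * ((x / (j * ‖z‖)) ^ 2) ^ (i + 1) := by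
            have e5 : x / (j * ‖z‖) = x / j * ‖z‖⁻¹ := by rw [div_mul_eq_div_div, div_eq_mul_inv _ ‖z‖]
            rw [← pow_mul, e5, mul_pow]; ring
        _ ≤ _ := by
            gcongr
            exact (hball z hz).2)
    (2 * m)
  have e4 : iteratedDeriv (2 * m) (phi x j) k = iteratedDeriv (2 * m) (fun z : ℂ => ∑' i : ℕ,
      (1 / (Real.pi * x)) * ((-1) ^ i * (x / j : ℂ) ^ (2 * (i + 1))) *
        z ^ (-(1 / 2) - 2 * (i + 1 : ℕ) : ℂ)) k := by
    refine Filter.EventuallyEq.iteratedDeriv_eq _ ?_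
    filter_upwards [Metric.ball_mem_nhds (k : ℂ) hρ0] with z hz
    refine phi_series2 hx (hre z hz) (lt_of_lt_of_le hR ?_)
    gcongr
    exact (hball z hz).2
  rw [e4]
  refine this.congr_fun fun i => ?_
  rw [iter_cpow_const _ _ _ (by simpa using hk)]

lemma phi_iter_W (m : ℕ) {x : ℝ} (hx : 0 < x) (hxint : ∀ k : ℤ, x ≠ (k : ℝ)) {j k : ℕ} (hj : 0 < j)
    (hk : 0 < k) :
    iteratedDeriv (2 * m) (phi x j) k = (1 / (Real.pi * x)) * ff (-(1 / 2)) (2 * m) *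
      (k : ℂ) ^ (-(1 / 2) - (2 * m : ℕ) : ℂ) * Wm m (j * k) x := by
  have hk' : (0 : ℝ) < k := by exact_mod_cast hk
  have hkc : (k : ℂ) ≠ 0 := by exact_mod_cast hk.ne'
  have hjc : (j : ℂ) ≠ 0 := by exact_mod_cast hj.ne'
  have hxc : (x : ℂ) ≠ 0 := by exact_mod_cast hx.ne'
  set P : ℂ := (1 / (Real.pi * x)) * ff (-(1 / 2)) (2 * m) * (k : ℂ) ^ (-(1 / 2) - (2 * m : ℕ) : ℂ) with hP
  unfold Wm F32
  split_ifs with hlt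
  · have h := phi_iter1 m hx hj hk' (by exact_mod_cast hlt)
    rw [Complex.ofReal_natCast] at h
    rw [← h.tsum_eq, ← tsum_mul_left]
    congr 1; ext i
    have e : (k : ℂ) ^ (2 * i - 1 / 2 - (2 * m : ℕ) : ℂ) =
        (k : ℂ) ^ (-(1 / 2) - (2 * m : ℕ) : ℂ) * (k : ℂ) ^ (2 * i) := by
      rw [← Complex.cpow_natCast _ (2 * i), ← Complex.cpow_add _ _ hkc]; congr 1; push_cast; ring
    have hf : ((i.factorial : ℕ) : ℂ) ≠ 0 := by exact_mod_cast i.factorial_ne_zero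
    rw [e, coef1, poch_one, hP]
    have e2 : (-(((j * k : ℕ)) : ℂ) ^ 2 / (x : ℂ) ^ 2) ^ i =
        (-1) ^ i * (j / x : ℂ) ^ (2 * i) * (k : ℂ) ^ (2 * i) := by
      rw [pow_mul, pow_mul, ← mul_pow, ← mul_pow]; congr 1; push_cast; ring
    rw [e2, mul_div_mul_right _ _ hf]
    ring
  · have hgt : x < j * k := by
      refine lt_of_le_of_ne (by push_cast at hlt; linarith) ?_
      have := hxint (j * k); push_cast at this; exact this
    have h := phi_iter2 m hx hj hk' hgt
    rw [Complex.ofReal_natCast] at h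
    set T : ℕ → ℂ := fun i => poch (1 / 4 + (m : ℂ)) i * poch (3 / 4 + (m : ℂ)) i * poch 1 i /
      (poch (1 / 4) i * poch (3 / 4) i * (i.factorial : ℂ)) *
        (-(x : ℂ) ^ 2 / (((j * k : ℕ)) : ℂ) ^ 2) ^ i with hT
    have hterm : ∀ i : ℕ, (1 / (Real.pi * x)) * ((-1) ^ i * (x / j : ℂ) ^ (2 * (i + 1))) *
      (ff (-(1 / 2) - 2 * (i + 1 : ℕ)) (2 * m) * (k : ℂ) ^ (-(1 / 2) - 2 * (i + 1 : ℕ) - (2 * m : ℕ) : ℂ))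
      = -P * T (i + 1) := by
      intro i
      have e : (k : ℂ) ^ (-(1 / 2) - 2 * (i + 1 : ℕ) - (2 * m : ℕ) : ℂ) =
          (k : ℂ) ^ (-(1 / 2) - (2 * m : ℕ) : ℂ) * ((k : ℂ)⁻¹) ^ (2 * (i + 1)) := by
        rw [inv_pow, ← Complex.cpow_natCast _ (2 * (i + 1)), ← Complex.cpow_neg,
          ← Complex.cpow_add _ _ hkc]; congr 1; push_cast; ring
      have hf : (((i + 1).factorial : ℕ) : ℂ) ≠ 0 := by exact_mod_cast (i + 1).factorial_ne_zero
      rw [e, coef2, hP, hT]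
      simp only
      rw [poch_one]
      have e2 : (-(x : ℂ) ^ 2 / (((j * k : ℕ)) : ℂ) ^ 2) ^ (i + 1) =
          -((-1) ^ i * (x / j : ℂ) ^ (2 * (i + 1)) * ((k : ℂ)⁻¹) ^ (2 * (i + 1))) := by
        have : -((-1 : ℂ) ^ i * (x / j : ℂ) ^ (2 * (i + 1)) * ((k : ℂ)⁻¹) ^ (2 * (i + 1))) =
          (-1) ^ (i + 1) * (x / j : ℂ) ^ (2 * (i + 1)) * ((k : ℂ)⁻¹) ^ (2 * (i + 1)) := by
          rw [pow_succ (-1 : ℂ)]; ring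
        rw [this, pow_mul, pow_mul, ← mul_pow, ← mul_pow]; congr 1; push_cast
        field_simp
      rw [e2, mul_div_mul_right _ _ hf]
      ring
    have hP0 : P ≠ 0 := by
      have hpi : (Real.pi : ℂ) ≠ 0 := by exact_mod_cast Real.pi_ne_zero
      refine mul_ne_zero (mul_ne_zero (one_div_ne_zero (mul_ne_zero hpi hxc)) ?_) ?_
      · rw [ff_half]
        have : 0 < Real.Gamma (2 * m + 1 / 2) := Real.Gamma_pos_of_pos (by positivity)
        have : Real.Gamma (2 * m + 1 / 2) / √Real.pi ≠ 0 := by positivity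
        exact_mod_cast this
      · exact fun h => hkc ((Complex.cpow_eq_zero_iff _ _).1 h).1
    have h' : HasSum (fun i => -P * T (i + 1)) (iteratedDeriv (2 * m) (phi x j) k) :=
      h.congr_fun fun i => (hterm i).symm
    have hs : Summable T := by
      rw [← summable_nat_add_iff 1]
      exact (summable_mul_left_iff (neg_ne_zero.2 hP0)).1 h'.summable
    have := hs.tsum_eq_zero_add
    rw [← h'.tsum_eq, tsum_mul_left, this]
    have hT0 : T 0 = 1 := by simp [hT, poch]
    rw [hT0]; ring
end CC

namespace CC
open Filter Topology Set MeasureTheory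

lemma geom_summable {c : ℝ} (hc : 0 < c) : Summable fun b : ℕ+ => Real.exp (-(c * b)) := by
  have h : Summable fun b : ℕ => Real.exp (-(c * b)) := by
    have := summable_geometric_of_lt_one (Real.exp_pos (-c)).le (by rw [Real.exp_lt_one_iff]; linarith)
    refine this.congr fun b => ?_
    rw [← Real.exp_nat_mul]; congr 1; ring
  exact h.comp_injective PNat.coe_injective

lemma pnat_inv_sq_summable : Summable fun b : ℕ+ => ((b : ℝ) ^ 2)⁻¹ :=
  (Real.summable_nat_pow_inv.2 (by norm_num)).comp_injective PNat.coe_injective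

lemma pnat_rpow_summable {s : ℝ} (hs : s < -1) : Summable fun b : ℕ+ => (b : ℝ) ^ s :=
  (Real.summable_nat_rpow.2 hs).comp_injective PNat.coe_injective

lemma tsum_contDiffAt {ι : Type*} {f : ι → ℂ → ℂ} (hf : ∀ i, DifferentiableOn ℂ (f i) RH) {t : ℝ}
    (ht : 0 < t) {u : ι → ℝ} (hu : Summable u)
    (hb : ∀ i, ∀ z : ℂ, ‖z - t‖ ≤ t / 2 → ‖f i z‖ ≤ u i) (l : ℕ) :
    ContDiffAt ℂ l (fun z => ∑' i, f i z) (t : ℂ) := by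
  have hBR : Metric.ball (t : ℂ) (t / 2) ⊆ RH := Metric.ball_subset_closedBall.trans (disc_subset ht)
  have htB : (t : ℂ) ∈ Metric.ball (t : ℂ) (t / 2) := Metric.mem_ball_self (by positivity)
  have h := Complex.differentiableOn_tsum_of_summable_norm hu (fun i => (hf i).mono hBR)
    Metric.isOpen_ball (fun i z hz => hb i z (by rw [← dist_eq_norm]; exact (Metric.mem_ball.1 hz).le))
  exact (h.analyticAt (Metric.isOpen_ball.mem_nhds htB)).contDiffAt

lemma phi_u {x : ℝ} (hx : 0 < x) {t : ℝ} (ht : 0 < t) (j : ℕ+) (z : ℂ) (hz : ‖z - t‖ ≤ t / 2) :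
    ‖phi x j z‖ ≤ (t / 2) ^ (-(1 / 2) : ℝ) * ((x / Real.pi) / (t / 2) ^ 2) * ((j : ℝ) ^ 2)⁻¹ := by
  refine (phi_disc_bound hx ht j.pos hz).trans (le_of_eq ?_)
  have : (0 : ℝ) < (j : ℕ) := by exact_mod_cast j.pos
  field_simp

lemma Dsum {x : ℝ} (hx : 0 < x) {t : ℝ} (ht : 0 < t) (l : ℕ) :
    HasSum (fun b : ℕ+ => iteratedDeriv l (hh (2 * Real.pi * b * x)) t)
      ((1 / (2 * Real.pi * x)) * (ff (-(1 / 2)) l * (t : ℂ) ^ (-(1 / 2) - l : ℂ))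
        - 1 / 2 * (ff (-(3 / 2)) l * (t : ℂ) ^ (-(3 / 2) - l : ℂ))
        + ∑' j : ℕ+, iteratedDeriv l (phi x j) t) := by
  have hs := (pnat_inv_sq_summable.mul_left ((t / 2) ^ (-(1 / 2) : ℝ) * ((x / Real.pi) / (t / 2) ^ 2)))
  have h1 := iter_hasSum (f := fun j : ℕ+ => phi x j) (fun j => phi_diffOn hx j) ht hs
    (fun j z hz => phi_u hx ht j z hz) l
  have h1c := tsum_contDiffAt (f := fun j : ℕ+ => phi x j) (fun j => phi_diffOn hx j) ht hs
    (fun j z hz => phi_u hx ht j z hz) l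
  have h2 := iter_hasSum (f := fun b : ℕ+ => hh (2 * Real.pi * b * x)) (fun b => hh_diffOn _) ht
    ((geom_summable (c := 4 * Real.pi * x / 9 / t) (by positivity)).mul_left ((t / 2) ^ (-(3 / 2) : ℝ)))
    (fun b z hz => by
      refine (hh_disc_bound (by positivity) ht hz).trans (le_of_eq ?_)
      congr 2; ring) l
  have htr : 0 < (t : ℂ).re := by simpa using ht
  have hc : ∀ c s : ℂ, ContDiffAt ℂ l (fun z : ℂ => c * z ^ s) (t : ℂ) := fun c s => by
    have : DifferentiableOn ℂ (fun z : ℂ => c * z ^ s) RH := fun z hz =>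
      ((cpow_diffAt s hz).const_mul c).differentiableWithinAt
    exact (this.analyticAt (RH_open.mem_nhds htr)).contDiffAt
  rw [h1.tsum_eq, ← iter_cpow_const _ _ _ htr, ← iter_cpow_const _ _ _ htr,
    ← iteratedDeriv_fun_sub (hc _ _) (hc _ _), ← iteratedDeriv_fun_add ((hc _ _).sub (hc _ _)) h1c]
  convert h2 using 1
  refine Filter.EventuallyEq.iteratedDeriv_eq _ ?_
  filter_upwards [RH_open.mem_nhds htr] with w hw
  exact (pf hx hw).symm

lemma phi_double_summable {x : ℝ} (hx : 0 < x) (l : ℕ) :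
    Summable fun p : ℕ+ × ℕ+ => iteratedDeriv l (phi x p.2) ((p.1 : ℕ) : ℂ) := by
  obtain ⟨C, hC, h⟩ := phi_iter_bound hx l
  have hl : (-(l + 5 / 2) : ℝ) < -1 := by
    have : (0 : ℝ) ≤ l := by positivity
    linarith
  refine Summable.of_norm_bounded (g := fun p : ℕ+ × ℕ+ => (p.1 : ℝ) ^ (-(l + 5 / 2) : ℝ) *
    (C * ((p.2 : ℝ) ^ 2)⁻¹))
    ((pnat_rpow_summable hl).mul_of_nonneg (pnat_inv_sq_summable.mul_left C)
    (fun _ => by positivity) (fun _ => by positivity)) ?_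
  rintro ⟨k, j⟩
  have := h j j.pos k (by exact_mod_cast k.pos)
  simp only [Complex.ofReal_natCast] at this
  refine this.trans (le_of_eq (by ring))

/-- regrouping of a double series by the product -/
lemma regroup {F : ℕ → ℕ → ℂ} (h : Summable fun p : ℕ+ × ℕ+ => F p.1 p.2) :
    ∑' p : ℕ+ × ℕ+, F p.1 p.2 = ∑' n : ℕ, ∑ d ∈ (n + 1).divisors, F d ((n + 1) / d) := by
  rw [← sigmaAntidiagonalEquivProd.tsum_eq]
  have h' := (sigmaAntidiagonalEquivProd.summable_iff (f := fun p : ℕ+ × ℕ+ => F p.1 p.2)).2 h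
  refine (Summable.tsum_sigma h').trans ?_
  rw [← tsum_pnat_eq_tsum_succ (f := fun n => ∑ d ∈ n.divisors, F d (n / d))]
  refine tsum_congr fun n => ?_
  rw [tsum_fintype, ← Nat.sum_divisorsAntidiagonal (f := F)]
  exact Finset.sum_coe_sort (n : ℕ).divisorsAntidiagonal (fun i => F i.1 i.2)

lemma rsigma_inv (r : ℝ) {n : ℕ} (hn : 0 < n) :
    ∑ d ∈ n.divisors, (d : ℝ) ^ (-r) = rsigma r n * (n : ℝ) ^ (-r) := by
  unfold rsigma
  rw [← Nat.sum_div_divisors, Finset.sum_mul]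
  refine Finset.sum_congr rfl fun d hd => ?_
  have hd0 : 0 < d := Nat.pos_of_mem_divisors hd
  have hd' : (0 : ℝ) < d := by exact_mod_cast hd0
  have hn' : (0 : ℝ) < n := by exact_mod_cast hn
  rw [Nat.cast_div (Nat.dvd_of_mem_divisors hd) hd'.ne', Real.div_rpow hn'.le hd'.le,
    Real.rpow_neg hd'.le, div_inv_eq_mul, mul_comm]

noncomputable def TT (m : ℕ) (x : ℝ) : ℂ := ∑' n : ℕ,
  ((rsigma (2 * m + 1 / 2) (n + 1) : ℝ) : ℂ) *
    ((((n : ℝ) + 1) ^ (-(2 * (m : ℝ)) - 1 / 2) : ℝ) : ℂ) * Wm m (n + 1) x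

lemma phi_sum (m : ℕ) {x : ℝ} (hx : 0 < x) (hxint : ∀ k : ℤ, x ≠ (k : ℝ)) :
    ∑' k : ℕ+, ∑' j : ℕ+, iteratedDeriv (2 * m) (phi x j) ((k : ℕ) : ℂ) =
      (1 / (Real.pi * x)) * ff (-(1 / 2)) (2 * m) * TT m x := by
  have hs := phi_double_summable hx (2 * m)
  rw [← hs.tsum_prod (f := fun p : ℕ+ × ℕ+ => iteratedDeriv (2 * m) (phi x p.2) ((p.1 : ℕ) : ℂ))]
  rw [regroup (F := fun k j => iteratedDeriv (2 * m) (phi x j) (k : ℂ)) hs, TT, ← tsum_mul_left]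
  refine tsum_congr fun n => ?_
  have := rsigma_inv (2 * m + 1 / 2) n.succ_pos
  have e : ((rsigma (2 * m + 1 / 2) (n + 1) : ℝ) : ℂ) *
    ((((n : ℝ) + 1) ^ (-(2 * (m : ℝ)) - 1 / 2) : ℝ) : ℂ) =
      ∑ d ∈ (n + 1).divisors, (d : ℂ) ^ (-(1 / 2) - (2 * m : ℕ) : ℂ) := by
    rw [← Complex.ofReal_mul]
    rw [show (-(2 * (m : ℝ)) - 1 / 2) = -(2 * m + 1 / 2) by ring]
    rw [← Nat.cast_succ, ← this, Complex.ofReal_sum]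
    refine Finset.sum_congr rfl fun d _ => ?_
    rw [Complex.ofReal_cpow d.cast_nonneg]
    push_cast
    congr 1; ring
  rw [e, Finset.sum_mul, Finset.mul_sum]
  refine Finset.sum_congr rfl fun d hd => ?_
  have hd0 : 0 < d := Nat.pos_of_mem_divisors hd
  have hdv := Nat.dvd_of_mem_divisors hd
  rw [phi_iter_W m hx hxint (Nat.div_pos (Nat.le_of_dvd n.succ_pos hdv) hd0) hd0,
    Nat.div_mul_cancel hdv]
  ring

end CC

namespace CC
open Filter Topology Set MeasureTheory

noncomputable def RR (M t : ℝ) : ℝ := 2 * √t * (1 - Real.exp (-(M / t)))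
noncomputable def SS (M t : ℝ) : ℝ :=
  (√t)⁻¹ * (1 - Real.exp (-(M / t)) - 2 * (M / t) * Real.exp (-(M / t)))

lemma we_le {w : ℝ} (hw : 0 ≤ w) : w * Real.exp (-w) ≤ 1 ∧ w ^ 2 * Real.exp (-w) ≤ 2 ∧
    0 ≤ w * Real.exp (-w) ∧ 0 ≤ w ^ 2 * Real.exp (-w) ∧ 0 ≤ Real.exp (-w) ∧ Real.exp (-w) ≤ 1 := by
  have h := Real.quadratic_le_exp_of_nonneg hw
  have h0 := Real.exp_pos w
  refine ⟨?_, ?_, by positivity, by positivity, by positivity, by rw [Real.exp_le_one_iff]; linarith⟩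
  · rw [Real.exp_neg, ← div_eq_mul_inv, div_le_one h0]; nlinarith
  · rw [Real.exp_neg, ← div_eq_mul_inv, div_le_iff₀ h0]; nlinarith

lemma Mdiv_deriv (M : ℝ) {t : ℝ} (ht : 0 < t) : HasDerivAt (fun t : ℝ => M / t) (-(M / t ^ 2)) t := by
  have := (hasDerivAt_inv ht.ne').const_mul M
  simpa only [div_eq_mul_inv, mul_neg] using this

lemma RR_deriv (M : ℝ) {t : ℝ} (ht : 0 < t) : HasDerivAt (RR M) (SS M t) t := by
  have h2 := ((Real.hasDerivAt_sqrt ht.ne').const_mul 2).mul ((Mdiv_deriv M ht).fun_neg.exp.const_sub 1)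
  refine HasDerivAt.congr_deriv (f := RR M) h2 ?_
  unfold SS
  have hs : 0 < √t := Real.sqrt_pos.2 ht
  have hs2 : √t ^ 2 = t := Real.sq_sqrt ht.le
  field_simp
  rw [hs2]; field_simp; ring

lemma SS_deriv (M : ℝ) {t : ℝ} (ht : 0 < t) : HasDerivAt (SS M)
    ((√t)⁻¹ / t * (-(1 / 2) * (1 - Real.exp (-(M / t)) - 2 * ((M / t) * Real.exp (-(M / t)))) +
      (M / t) * Real.exp (-(M / t)) - 2 * ((M / t) ^ 2 * Real.exp (-(M / t))))) t := by
  have hs : 0 < √t := Real.sqrt_pos.2 ht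
  have h0 := Mdiv_deriv M ht
  have h2 := ((Real.hasDerivAt_sqrt ht.ne').fun_inv hs.ne').mul
    ((h0.fun_neg.exp.const_sub 1).sub ((h0.const_mul 2).mul h0.fun_neg.exp))
  refine HasDerivAt.congr_deriv (f := SS M) h2 ?_
  have hs2 : √t ^ 2 = t := Real.sq_sqrt ht.le
  simp only [Pi.sub_apply, Pi.mul_apply]
  rw [hs2]
  field_simp; ring

lemma SS_deriv_bound {M t : ℝ} (hM : 0 ≤ M) (ht : 0 < t) :
    |(√t)⁻¹ / t * (-(1 / 2) * (1 - Real.exp (-(M / t)) - 2 * ((M / t) * Real.exp (-(M / t)))) +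
      (M / t) * Real.exp (-(M / t)) - 2 * ((M / t) ^ 2 * Real.exp (-(M / t))))| ≤ 10 * ((√t)⁻¹ / t) := by
  obtain ⟨h1, h2, h3, h4, h5, h6⟩ := we_le (w := M / t) (by positivity)
  rw [abs_mul, abs_of_nonneg (by positivity : 0 ≤ (√t)⁻¹ / t), mul_comm]
  refine mul_le_mul_of_nonneg_right ?_ (by positivity)
  rw [abs_le]
  constructor <;> linarith

lemma SR_bound {M : ℝ} (hM : 0 ≤ M) (i : ℕ) :
    |SS M (i + 1) - (RR M (i + 1) - RR M i)| ≤ 40 * (((i : ℝ) + 1) ^ (-(3 / 2) : ℝ)) := by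
  rcases i.eq_zero_or_pos with rfl | hi
  · obtain ⟨h1, h2, h3, h4, h5, h6⟩ := we_le (w := M) hM
    simp only [SS, RR, Nat.cast_zero, zero_add, Real.sqrt_one, div_one, inv_one, one_mul,
      Real.sqrt_zero, mul_zero, zero_mul, sub_zero, Real.one_rpow, mul_one]
    rw [abs_le]
    constructor <;> linarith
  · have hi' : (1 : ℝ) ≤ i := by exact_mod_cast hi
    have hi0 : (0 : ℝ) < i := by linarith
    obtain ⟨c, hc, e⟩ := exists_hasDerivAt_eq_slope (RR M) (SS M) (show (i : ℝ) < i + 1 by linarith)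
      (fun t ht => (RR_deriv M (hi0.trans_le ht.1)).continuousAt.continuousWithinAt)
      (fun t ht => RR_deriv M (hi0.trans ht.1))
    obtain ⟨d, hd, e2⟩ := exists_hasDerivAt_eq_slope (SS M) _ hc.2
      (fun t ht => (SS_deriv M ((hi0.trans hc.1).trans_le ht.1)).continuousAt.continuousWithinAt)
      (fun t ht => SS_deriv M ((hi0.trans hc.1).trans ht.1))
    have hd0 : (i : ℝ) < d := hc.1.trans hd.1
    have hdp : 0 < d := hi0.trans hd0
    have e' : RR M (i + 1) - RR M i = SS M c := by rw [e]; simp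
    have hcp : 0 < (i : ℝ) + 1 - c := by linarith [hc.2]
    have hb := SS_deriv_bound hM hdp
    rw [e2, abs_div, abs_of_pos hcp, div_le_iff₀ hcp] at hb
    rw [e']
    have h3 : (√d)⁻¹ / d = d ^ (-(3 / 2) : ℝ) := by
      rw [Real.sqrt_eq_rpow, ← Real.rpow_neg hdp.le, ← Real.rpow_sub_one hdp.ne']; norm_num
    have h4 : d ^ (-(3 / 2) : ℝ) ≤ (((i : ℝ) + 1) / 2) ^ (-(3 / 2) : ℝ) :=
      Real.rpow_le_rpow_of_nonpos (by positivity) (by linarith) (by norm_num)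
    have h5 : (((i : ℝ) + 1) / 2) ^ (-(3 / 2) : ℝ) ≤ 4 * ((i : ℝ) + 1) ^ (-(3 / 2) : ℝ) := by
      rw [Real.div_rpow (by positivity) (by norm_num), div_eq_mul_inv, ← Real.rpow_neg (by norm_num),
        mul_comm]
      have : (2 : ℝ) ^ (- -(3 / 2) : ℝ) ≤ 4 := by
        calc (2 : ℝ) ^ (- -(3 / 2) : ℝ) ≤ 2 ^ (2 : ℝ) :=
              Real.rpow_le_rpow_of_exponent_le (by norm_num) (by norm_num)
          _ = 4 := by norm_num
      gcongr
    have h6 : 0 ≤ (√d)⁻¹ / d := by positivity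
    have h7 : (i : ℝ) + 1 - c ≤ 1 := by linarith [hc.1]
    nlinarith

lemma succ_rpow_summable {s : ℝ} (hs : s < -1) : Summable fun i : ℕ => ((i : ℝ) + 1) ^ s := by
  have := (summable_nat_add_iff 1).2 (Real.summable_nat_rpow.2 hs)
  simpa using this

lemma SR_summable {M : ℝ} (hM : 0 ≤ M) :
    Summable fun i : ℕ => SS M (i + 1) - (RR M (i + 1) - RR M i) :=
  Summable.of_norm_bounded ((succ_rpow_summable (by norm_num)).mul_left 40) (fun i => SR_bound hM i)

lemma exp_tendsto {t : ℝ} (ht : 0 < t) : Tendsto (fun M : ℝ => Real.exp (-(M / t))) atTop (𝓝 0) :=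
  Real.tendsto_exp_neg_atTop_nhds_zero.comp (tendsto_id.atTop_div_const ht)

lemma SS_lim {t : ℝ} (ht : 0 < t) : Tendsto (fun M => SS M t) atTop (𝓝 (√t)⁻¹) := by
  have h1 := exp_tendsto ht
  have h2 : Tendsto (fun M : ℝ => (M / t) * Real.exp (-(M / t))) atTop (𝓝 0) := by
    have := (Real.tendsto_pow_mul_exp_neg_atTop_nhds_zero 1).comp (tendsto_id.atTop_div_const ht)
    simpa [Function.comp_def] using this
  have := ((h1.const_sub 1).sub (h2.const_mul 2)).const_mul (√t)⁻¹
  simp only [mul_zero, sub_zero, mul_one] at this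
  refine this.congr fun M => ?_
  unfold SS; ring

lemma RR_lim {t : ℝ} (ht : 0 ≤ t) : Tendsto (fun M => RR M t) atTop (𝓝 (2 * √t)) := by
  rcases ht.eq_or_lt with rfl | ht
  · simp [RR]
  · have := ((exp_tendsto ht).const_sub 1).const_mul (2 * √t)
    simpa [RR] using this

lemma SR_lim : ∃ z : ℝ, (z : ℂ) = riemannZeta (1 / 2) ∧
    Tendsto (fun M => ∑' i : ℕ, (SS M (i + 1) - (RR M (i + 1) - RR M i))) atTop (𝓝 z) := by
  have hlim : ∀ i : ℕ, Tendsto (fun M => SS M (i + 1) - (RR M (i + 1) - RR M i)) atTop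
      (𝓝 ((√((i : ℝ) + 1))⁻¹ - (2 * √((i : ℝ) + 1) - 2 * √(i : ℝ)))) := fun i =>
    (SS_lim (by positivity)).sub ((RR_lim (by positivity)).sub (RR_lim (by positivity)))
  have hS : Summable fun i : ℕ => ((√((i : ℝ) + 1))⁻¹ - (2 * √((i : ℝ) + 1) - 2 * √(i : ℝ))) := by
    refine Summable.of_norm_bounded ((succ_rpow_summable (s := -(3 / 2)) (by norm_num)).mul_left 40)
      (fun i => ?_)
    refine le_of_tendsto (hlim i).norm ?_
    filter_upwards [eventually_ge_atTop 0] with M hM using SR_bound hM i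
  refine ⟨_, ?_, tendsto_tsum_of_dominated_convergence
    (succ_rpow_summable (s := -(3 / 2)) (by norm_num) |>.mul_left 40) hlim ?_⟩
  · have h1 := hS.hasSum.tendsto_sum_nat
    have h2 := (Complex.continuous_ofReal.tendsto _).comp h1
    refine tendsto_nhds_unique h2 (zeta_half_limit.congr fun N => ?_)
    simp only [Function.comp]
    congr 1
    have : ∑ i ∈ Finset.range N, (2 * √((i : ℝ) + 1) - 2 * √(i : ℝ)) = 2 * √(N : ℝ) := by
      have := Finset.sum_range_sub (fun i : ℕ => 2 * √(i : ℝ)) N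
      simpa using this
    rw [Finset.sum_sub_distrib, this]
    congr 1
    refine Finset.sum_congr rfl fun i _ => ?_
    rw [Real.sqrt_eq_rpow, ← Real.rpow_neg (by positivity)]
  · filter_upwards [eventually_ge_atTop 0] with M hM i using SR_bound hM i

lemma RR_tendsto (M : ℝ) (hM : 0 ≤ M) : Tendsto (fun N : ℕ => RR M N) atTop (𝓝 0) := by
  have h : Tendsto (fun N : ℕ => 2 * M * (√(N : ℝ))⁻¹) atTop (𝓝 0) := by
    have := ((Real.tendsto_sqrt_atTop.comp tendsto_natCast_atTop_atTop).inv_tendsto_atTop).const_mul (2 * M)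
    simpa using this
  refine squeeze_zero_norm' ?_ h
  filter_upwards [eventually_gt_atTop 0] with N hN
  have hN' : (0 : ℝ) < N := by exact_mod_cast hN
  have h1 := Real.one_sub_le_exp_neg (M / N)
  obtain ⟨-, -, -, -, h5, h6⟩ := we_le (w := M / N) (by positivity)
  unfold RR
  rw [Real.norm_of_nonneg (mul_nonneg (by positivity) (by linarith))]
  have hs : 0 < √(N : ℝ) := Real.sqrt_pos.2 hN'
  calc 2 * √(N : ℝ) * (1 - Real.exp (-(M / N))) ≤ 2 * √(N : ℝ) * (M / N) := by gcongr; linarith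
    _ = 2 * M * (√(N : ℝ))⁻¹ := by
      have hs2 : √(N : ℝ) ^ 2 = N := Real.sq_sqrt hN'.le
      field_simp
      rw [hs2]; ring

lemma inv_sqrt_div {t : ℝ} (ht : 0 < t) : (√t)⁻¹ / t = t ^ (-(3 / 2) : ℝ) := by
  rw [Real.sqrt_eq_rpow, ← Real.rpow_neg ht.le, ← Real.rpow_sub_one ht.ne']; norm_num

lemma pp_summable {M : ℝ} (hM : 0 ≤ M) :
    Summable fun i : ℕ => (√((i : ℝ) + 1))⁻¹ * (1 - Real.exp (-(M / (i + 1)))) := by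
  refine Summable.of_norm_bounded ((succ_rpow_summable (s := -(3 / 2)) (by norm_num)).mul_left M)
      (fun i => ?_)
  have hi : (0 : ℝ) < (i : ℝ) + 1 := by positivity
  have h1 := Real.one_sub_le_exp_neg (M / (i + 1))
  obtain ⟨-, -, -, -, h5, h6⟩ := we_le (w := M / ((i : ℝ) + 1)) (by positivity)
  rw [Real.norm_of_nonneg (mul_nonneg (by positivity) (by linarith)), ← inv_sqrt_div hi]
  calc _ ≤ (√((i : ℝ) + 1))⁻¹ * (M / (i + 1)) := by gcongr; linarith
    _ = _ := by ring

lemma hr_summable {M : ℝ} (hM : 0 ≤ M) :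
    Summable fun i : ℕ => ((i : ℝ) + 1) ^ (-(3 / 2) : ℝ) * Real.exp (-(M / (i + 1))) := by
  refine Summable.of_norm_bounded (succ_rpow_summable (s := -(3 / 2)) (by norm_num)) (fun i => ?_)
  obtain ⟨-, -, -, -, h5, h6⟩ := we_le (w := M / ((i : ℝ) + 1)) (by positivity)
  rw [Real.norm_of_nonneg (by positivity)]
  exact mul_le_of_le_one_right (by positivity) h6

lemma pp_eq {M : ℝ} (hM : 0 ≤ M) :
    ∑' i : ℕ, (√((i : ℝ) + 1))⁻¹ * (1 - Real.exp (-(M / (i + 1)))) =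
      ∑' i : ℕ, (SS M (i + 1) - (RR M (i + 1) - RR M i)) +
        2 * M * ∑' i : ℕ, ((i : ℝ) + 1) ^ (-(3 / 2) : ℝ) * Real.exp (-(M / (i + 1))) := by
  have h1 := pp_summable hM
  have h2 := (hr_summable hM).mul_left (2 * M)
  have h3 := SR_summable hM
  have e : ∀ i : ℕ, SS M (i + 1) = (√((i : ℝ) + 1))⁻¹ * (1 - Real.exp (-(M / (i + 1)))) -
      2 * M * (((i : ℝ) + 1) ^ (-(3 / 2) : ℝ) * Real.exp (-(M / (i + 1)))) := by
    intro i
    rw [← inv_sqrt_div (by positivity)]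
    unfold SS; ring
  have h4 : Summable fun i : ℕ => RR M (i + 1) - RR M i := by
    refine ((h1.sub h2).sub h3).congr fun i => ?_
    rw [e]; ring
  have h5 : ∑' i : ℕ, (RR M (i + 1) - RR M i) = 0 := by
    refine tendsto_nhds_unique h4.hasSum.tendsto_sum_nat ((RR_tendsto M hM).congr fun N => ?_)
    have := Finset.sum_range_sub (fun i : ℕ => RR M i) N
    have h0 : RR M 0 = 0 := by simp [RR]
    simp only [Nat.cast_add, Nat.cast_one, Nat.cast_zero, h0, sub_zero] at this
    exact this.symm
  have h6 : Summable fun i : ℕ => SS M (i + 1) := (h1.sub h2).congr fun i => (e i).symm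
  rw [h6.tsum_sub h4, h5, sub_zero, tsum_congr e, h1.tsum_sub h2, tsum_mul_left]
  ring

lemma hr_eq {M : ℝ} (hM : 0 < M) :
    2 * M * ∑' i : ℕ, ((i : ℝ) + 1) ^ (-(3 / 2) : ℝ) * Real.exp (-(M / (i + 1))) =
      2 * √(Real.pi * M) + 4 * √(Real.pi * M) * ∑' n : ℕ+, ee (2 * √M * √(Real.pi * n)) := by
  have hs : 0 < √M := Real.sqrt_pos.2 hM
  have hs2 : √M ^ 2 = M := Real.sq_sqrt hM.le
  have h := poisson 0 hs
  simp only [mul_zero, pow_zero, one_mul, mul_one, iteratedDeriv_zero] at h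
  rw [hs2, tsum_pnat_eq_tsum_succ (f := fun k : ℕ => hh M (k : ℂ))] at h
  have e : ∀ i : ℕ, hh M ((i + 1 : ℕ) : ℂ) =
      ((((i : ℝ) + 1) ^ (-(3 / 2) : ℝ) * Real.exp (-(M / (i + 1))) : ℝ) : ℂ) := by
    intro i
    have := hh_ofReal M (t := (i : ℝ) + 1) (by positivity)
    rw [← this]; push_cast; rfl
  rw [tsum_congr e, ← Complex.ofReal_tsum, ← Complex.ofReal_tsum] at h
  have h' : ∑' i : ℕ, ((i : ℝ) + 1) ^ (-(3 / 2) : ℝ) * Real.exp (-(M / (i + 1))) =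
      √Real.pi / √M * (1 + 2 * ∑' n : ℕ+, ee (2 * √M * √(Real.pi * n))) := by exact_mod_cast h
  rw [h', Real.sqrt_mul Real.pi_pos.le]
  have : 2 * M * (√Real.pi / √M) = 2 * (√Real.pi * √M) := by
    field_simp; rw [hs2]
  rw [← mul_assoc, this]; ring

lemma ee_tail : Tendsto (fun M : ℝ => 4 * √(Real.pi * M) * ∑' n : ℕ+, ee (2 * √M * √(Real.pi * n)))
    atTop (𝓝 0) := by
  obtain ⟨K, hK, hb⟩ := pow_exp_sqrt_bound 0 (c := 2 * √Real.pi) (by positivity)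
  set Z := ∑' n : ℕ+, ((n : ℝ) ^ 2)⁻¹ with hZ
  have hlim : Tendsto (fun M : ℝ => 4 * √Real.pi * K * Z * M⁻¹) atTop (𝓝 0) := by
    simpa using tendsto_inv_atTop_zero.const_mul (4 * √Real.pi * K * Z)
  refine squeeze_zero_norm' ?_ hlim
  filter_upwards [eventually_ge_atTop 1] with M hM
  have hM0 : 0 < M := by linarith
  have h1 : ∀ n : ℕ+, ‖ee (2 * √M * √(Real.pi * n))‖ ≤ K * (M ^ 2)⁻¹ * ((n : ℝ) ^ 2)⁻¹ := by
    intro n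
    have hn : (0 : ℝ) < n := by exact_mod_cast n.pos
    have := hb (M * n) (by positivity)
    rw [pow_zero, one_mul] at this
    refine (abs_ee_le _).trans ?_
    refine le_trans (le_of_eq ?_) (this.trans (le_of_eq ?_))
    · congr 2
      rw [Real.sqrt_mul Real.pi_pos.le, Real.sqrt_mul hM0.le]; ring
    · rw [mul_pow, mul_inv]; ring
  have h2 : ‖∑' n : ℕ+, ee (2 * √M * √(Real.pi * n))‖ ≤ K * (M ^ 2)⁻¹ * Z := by
    rw [hZ, ← tsum_mul_left]
    exact tsum_of_norm_bounded (pnat_inv_sq_summable.mul_left _).hasSum h1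
  have hZ0 : 0 ≤ Z := tsum_nonneg fun n => by positivity
  have h3 : √M ≤ M := by
    rw [Real.sqrt_le_left hM0.le]; nlinarith
  rw [norm_mul, Real.norm_of_nonneg (by positivity), Real.sqrt_mul Real.pi_pos.le]
  calc 4 * (√Real.pi * √M) * ‖∑' n : ℕ+, ee (2 * √M * √(Real.pi * n))‖
      ≤ 4 * (√Real.pi * M) * (K * (M ^ 2)⁻¹ * Z) := by gcongr
    _ = _ := by field_simp

/-- Lemma E -/
lemma lemE : ∃ z : ℝ, (z : ℂ) = riemannZeta (1 / 2) ∧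
    Tendsto (fun M => ∑' i : ℕ, (√((i : ℝ) + 1))⁻¹ * (1 - Real.exp (-(M / (i + 1)))) -
      2 * √(Real.pi * M)) atTop (𝓝 z) := by
  obtain ⟨z, hz, h⟩ := SR_lim
  refine ⟨z, hz, ?_⟩
  have := h.add ee_tail
  rw [add_zero] at this
  refine this.congr' ?_
  filter_upwards [eventually_gt_atTop 0] with M hM
  rw [pp_eq hM.le, hr_eq hM]; ring

end CC

namespace CC
open Filter Topology Set MeasureTheory

noncomputable def GG (m : ℕ) (x : ℝ) (b : ℕ) : ℂ :=
  ∑' a : ℕ+, (a : ℂ) ^ (2 * m) * ((ee (2 * Real.pi * √(2 * (a * b) * x)) : ℝ) : ℂ)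

noncomputable def KK (m : ℕ) (x : ℝ) (b : ℕ) : ℂ :=
  ∑' k : ℕ+, iteratedDeriv (2 * m) (hh (2 * Real.pi * b * x)) (k : ℂ)

lemma KK_eq (m : ℕ) {x : ℝ} (hx : 0 < x) {b : ℕ} (hb : 0 < b) :
    KK m x b = (((√(2 * x))⁻¹ : ℝ) : ℂ) * (((√(b : ℝ))⁻¹ : ℝ) : ℂ) *
      ((0 : ℂ) ^ (2 * m) + 2 * (-1) ^ m * (2 * Real.pi) ^ (2 * m) * GG m x b) := by
  have hb' : (0 : ℝ) < b := by exact_mod_cast hb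
  have hpi := Real.pi_pos
  have hp : 0 < √(2 * Real.pi * b * x) := Real.sqrt_pos.2 (by positivity)
  have h := poisson m hp
  rw [Real.sq_sqrt (by positivity)] at h
  have e1 : √Real.pi / √(2 * Real.pi * b * x) = (√(2 * x))⁻¹ * (√(b : ℝ))⁻¹ := by
    rw [← mul_inv, ← Real.sqrt_mul (by positivity), ← Real.sqrt_div hpi.le, ← Real.sqrt_inv]
    congr 1; field_simp
  have e2 : ∀ n : ℕ+, 2 * √(2 * Real.pi * b * x) * √(Real.pi * n) =
      2 * Real.pi * √(2 * (n * b) * x) := by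
    intro n
    rw [mul_assoc, ← Real.sqrt_mul (by positivity), mul_assoc 2 Real.pi √_]
    congr 1
    rw [show 2 * Real.pi * b * x * (Real.pi * n) = Real.pi ^ 2 * (2 * (n * b) * x) by ring,
      Real.sqrt_mul (by positivity), Real.sqrt_sq hpi.le]
  unfold KK GG
  rw [h, e1]
  simp only [e2]
  push_cast
  rfl

lemma GG_eq (m : ℕ) {x : ℝ} (hx : 0 < x) {b : ℕ} (hb : 0 < b) :
    (((√(b : ℝ))⁻¹ : ℝ) : ℂ) * GG m x b = (-1) ^ m / (2 * (2 * Real.pi) ^ (2 * m)) *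
      ((√(2 * x) : ℝ) * KK m x b - (0 : ℂ) ^ (2 * m) * (((√(b : ℝ))⁻¹ : ℝ) : ℂ)) := by
  rw [KK_eq m hx hb]
  have h1 : ((√(2 * x) : ℝ) : ℂ) ≠ 0 := by
    rw [Complex.ofReal_ne_zero]; positivity
  have hpi : (Real.pi : ℂ) ≠ 0 := by exact_mod_cast Real.pi_ne_zero
  have h2 : ((-1 : ℂ) ^ m) ^ 2 = 1 := by rw [← pow_mul, mul_comm, pow_mul]; simp
  rw [Complex.ofReal_inv (√(2 * x))]
  generalize (((√(b : ℝ))⁻¹ : ℝ) : ℂ) = s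
  field_simp
  linear_combination (-2 * s * (2 * (Real.pi : ℂ)) ^ (2 * m) * GG m x b) * h2

lemma F_bound (m : ℕ) {x K : ℝ} (hx : 0 < x)
    (hb : ∀ u : ℝ, 0 < u → u ^ (2 * m) * Real.exp (-(2 * Real.pi * √(2 * x) * √u)) ≤ K * (u ^ 2)⁻¹)
    {a b : ℝ} (ha : 1 ≤ a) (hb1 : 1 ≤ b) :
    a ^ (2 * m) * |(√b)⁻¹| * |ee (2 * Real.pi * √(2 * (a * b) * x))| ≤ K * (a ^ 2)⁻¹ * (b ^ 2)⁻¹ := by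
  have ha0 : 0 < a := by linarith
  have hb0 : 0 < b := by linarith
  have h1 : |(√b)⁻¹| ≤ 1 := by
    rw [abs_of_nonneg (by positivity)]
    exact inv_le_one_of_one_le₀ (Real.one_le_sqrt.2 hb1)
  have h2 : |ee (2 * Real.pi * √(2 * (a * b) * x))| ≤ Real.exp (-(2 * Real.pi * √(2 * x) * √(a * b))) := by
    refine (abs_ee_le _).trans (le_of_eq ?_)
    rw [mul_assoc (2 * Real.pi) √(2 * x), ← Real.sqrt_mul (by positivity)]
    rw [show 2 * (a * b) * x = 2 * x * (a * b) by ring]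
  have h3 := hb (a * b) (by positivity)
  have h4 : a ^ (2 * m) ≤ (a * b) ^ (2 * m) :=
    pow_le_pow_left₀ ha0.le (le_mul_of_one_le_right ha0.le hb1) _
  calc a ^ (2 * m) * |(√b)⁻¹| * |ee (2 * Real.pi * √(2 * (a * b) * x))|
      ≤ (a * b) ^ (2 * m) * 1 * Real.exp (-(2 * Real.pi * √(2 * x) * √(a * b))) :=
        mul_le_mul (mul_le_mul h4 h1 (abs_nonneg _) (by positivity)) h2 (abs_nonneg _)
          (by positivity)
    _ ≤ K * (a ^ 2)⁻¹ * (b ^ 2)⁻¹ := by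
        rw [mul_one]
        refine h3.trans (le_of_eq ?_)
        rw [mul_pow, mul_inv]; ring

lemma F_summable (m : ℕ) {x : ℝ} (hx : 0 < x) : Summable fun p : ℕ+ × ℕ+ =>
    (p.1 : ℂ) ^ (2 * m) * (((√(p.2 : ℝ))⁻¹ : ℝ) : ℂ) *
      ((ee (2 * Real.pi * √(2 * (p.1 * p.2) * x)) : ℝ) : ℂ) := by
  have hpi := Real.pi_pos
  obtain ⟨K, hK, hb⟩ := pow_exp_sqrt_bound (2 * m) (c := 2 * Real.pi * √(2 * x)) (by positivity)
  have hs : Summable fun p : ℕ+ × ℕ+ => (K * ((p.1 : ℝ) ^ 2)⁻¹) * ((p.2 : ℝ) ^ 2)⁻¹ :=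
    (pnat_inv_sq_summable.mul_left K).mul_of_nonneg pnat_inv_sq_summable
      (fun _ => by positivity) (fun _ => by positivity)
  refine Summable.of_norm_bounded hs fun p => ?_
  have h := F_bound m hx hb (a := ((p.1 : ℕ) : ℝ)) (b := ((p.2 : ℕ) : ℝ)) (by exact_mod_cast p.1.one_le)
    (by exact_mod_cast p.2.one_le)
  rw [norm_mul, norm_mul, norm_pow, Complex.norm_natCast, Complex.norm_real, Complex.norm_real]
  exact h

noncomputable def LHS (m : ℕ) (x : ℝ) : ℂ :=
  (∑' n : ℕ, ((rsigma (2 * m + 1 / 2) (n + 1) / Real.sqrt ((n : ℝ) + 1) *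
        Real.exp (-(2 * Real.pi * Real.sqrt (2 * ((n : ℝ) + 1) * x))) *
        Real.cos (2 * Real.pi * Real.sqrt (2 * ((n : ℝ) + 1) * x)) : ℝ) : ℂ))

lemma LHS_hasSum (m : ℕ) {x : ℝ} (hx : 0 < x) :
    HasSum (fun b : ℕ+ => (((√(b : ℝ))⁻¹ : ℝ) : ℂ) * GG m x b) (LHS m x) := by
  have hs := F_summable m hx
  have hs' := hs.prod_symm
  have e0 : LHS m x = ∑' p : ℕ+ × ℕ+, (p.1 : ℂ) ^ (2 * m) * (((√(p.2 : ℝ))⁻¹ : ℝ) : ℂ) *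
      ((ee (2 * Real.pi * √(2 * (p.1 * p.2) * x)) : ℝ) : ℂ) := by
    rw [regroup (F := fun a b => (a : ℂ) ^ (2 * m) * (((√(b : ℝ))⁻¹ : ℝ) : ℂ) *
      ((ee (2 * Real.pi * √(2 * (a * b) * x)) : ℝ) : ℂ)) hs]
    unfold LHS
    refine tsum_congr fun n => ?_
    have : ∀ d ∈ (n + 1).divisors, (d : ℂ) ^ (2 * m) * (((√(((n + 1) / d : ℕ) : ℝ))⁻¹ : ℝ) : ℂ) *
        ((ee (2 * Real.pi * √(2 * (d * ((n + 1) / d : ℕ)) * x)) : ℝ) : ℂ) =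
        (((d : ℝ) ^ (2 * m + 1 / 2 : ℝ) * ((√((n : ℝ) + 1))⁻¹ * ee (2 * Real.pi * √(2 * ((n : ℝ) + 1) * x))) : ℝ) : ℂ) := by
      intro d hd
      have hd0 : 0 < d := Nat.pos_of_mem_divisors hd
      have hd' : (0 : ℝ) < d := by exact_mod_cast hd0
      have hdv := Nat.dvd_of_mem_divisors hd
      have e3 : (d : ℝ) * ((n + 1) / d : ℕ) = (n : ℝ) + 1 := by
        rw [← Nat.cast_mul, Nat.mul_div_cancel' hdv]; push_cast; ring
      rw [e3]
      have e4 : (√(((n + 1) / d : ℕ) : ℝ))⁻¹ = (d : ℝ) ^ (1 / 2 : ℝ) * (√((n : ℝ) + 1))⁻¹ := by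
        rw [← e3, Real.sqrt_mul hd'.le, ← Real.sqrt_eq_rpow]
        have : 0 < √(d : ℝ) := Real.sqrt_pos.2 hd'
        rw [mul_inv, ← mul_assoc, mul_inv_cancel₀ this.ne', one_mul]
      have e5 : (d : ℝ) ^ (2 * m + 1 / 2 : ℝ) = (d : ℝ) ^ (2 * m) * (d : ℝ) ^ (1 / 2 : ℝ) := by
        rw [Real.rpow_add hd', ← Real.rpow_natCast]; push_cast; rfl
      rw [e4, e5]
      push_cast; ring
    rw [Finset.sum_congr rfl this, ← Complex.ofReal_sum, ← Finset.sum_mul]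
    congr 1
    unfold rsigma ee
    ring
  rw [e0]
  have h1 := hs'.hasSum.prod_fiberwise (fun b => (hs'.prod_factor b).hasSum)
  have e6 : ∑' p : ℕ+ × ℕ+, (p.1 : ℂ) ^ (2 * m) * (((√(p.2 : ℝ))⁻¹ : ℝ) : ℂ) *
      ((ee (2 * Real.pi * √(2 * (p.1 * p.2) * x)) : ℝ) : ℂ) = ∑' p : ℕ+ × ℕ+, (p.2 : ℂ) ^ (2 * m) *
        (((√(p.1 : ℝ))⁻¹ : ℝ) : ℂ) * ((ee (2 * Real.pi * √(2 * (p.2 * p.1) * x)) : ℝ) : ℂ) :=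
    ((Equiv.prodComm ℕ+ ℕ+).tsum_eq _).symm
  rw [e6]
  simp only [Prod.fst_swap, Prod.snd_swap] at h1
  convert h1 using 1
  ext b
  unfold GG
  rw [← tsum_mul_left]
  refine tsum_congr fun a => ?_
  ring

end CC

namespace CC
open Filter Topology Set MeasureTheory

noncomputable def cc (m : ℕ) (x : ℝ) : ℂ := (-1) ^ m / (2 * (2 * Real.pi) ^ (2 * m)) * (√(2 * x) : ℝ)

lemma zeta_pnat {s : ℂ} (hs : 1 < s.re) : HasSum (fun k : ℕ+ => (k : ℂ) ^ (-s)) (riemannZeta s) := by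
  have h1 : Summable fun k : ℕ+ => (k : ℂ) ^ (-s) := by
    have := (Complex.summable_one_div_nat_cpow.2 hs).comp_injective PNat.coe_injective
    refine this.congr fun k => ?_
    simp [Complex.cpow_neg]
  have h2 := h1.hasSum
  rw [tsum_pnat_eq_tsum_succ (f := fun k : ℕ => (k : ℂ) ^ (-s))] at h2
  rw [zeta_eq_tsum_one_div_nat_add_one_cpow hs]
  convert h2 using 1
  refine tsum_congr fun n => ?_
  simp [Complex.cpow_neg]

noncomputable def BB (m : ℕ) (x : ℝ) : ℂ :=
  (1 / (2 * Real.pi * x)) * (ff (-(1 / 2)) (2 * m) * riemannZeta (2 * m + 1 / 2))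
    - 1 / 2 * (ff (-(3 / 2)) (2 * m) * riemannZeta (2 * m + 3 / 2))
    + (1 / (Real.pi * x)) * ff (-(1 / 2)) (2 * m) * TT m x

lemma hh_double_summable {m : ℕ} (hm : 0 < m) {x : ℝ} (hx : 0 < x) :
    Summable fun p : ℕ+ × ℕ+ => iteratedDeriv (2 * m) (hh (2 * Real.pi * p.1 * x)) ((p.2 : ℕ) : ℂ) := by
  have hpi := Real.pi_pos
  set c := 4 * Real.pi * x / 9 with hc
  have hc0 : 0 < c := by positivity
  have hm' : (1 : ℝ) ≤ m := by exact_mod_cast hm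
  have hs : Summable fun p : ℕ+ × ℕ+ => (2 * Cl (2 * m) / c ^ 2 * ((p.1 : ℝ) ^ 2)⁻¹) *
      ((p.2 : ℝ) ^ (-(((2 * m : ℕ) : ℝ) + 3 / 2) + 2 : ℝ)) :=
    (pnat_inv_sq_summable.mul_left _).mul_of_nonneg (pnat_rpow_summable (by push_cast; linarith))
      (fun _ => by have := (Cl_pos (2 * m)).le; positivity) (fun _ => by positivity)
  refine Summable.of_norm_bounded hs fun p => ?_
  have hb : (0 : ℝ) < (p.1 : ℕ) := by exact_mod_cast p.1.pos
  have hk : (0 : ℝ) < (p.2 : ℕ) := by exact_mod_cast p.2.pos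
  have h := hh_iter_bound (A := 2 * Real.pi * (p.1 : ℕ) * x) (by positivity) hk (2 * m)
  rw [Complex.ofReal_natCast] at h
  refine h.trans ?_
  have e : 2 * (2 * Real.pi * (p.1 : ℕ) * x) / 9 / (p.2 : ℕ) = c * (p.1 : ℕ) / (p.2 : ℕ) := by
    rw [hc]; ring
  rw [e]
  generalize ((p.1 : ℕ) : ℝ) = b at *
  generalize ((p.2 : ℕ) : ℝ) = k at *
  have h2 := (we_le (w := c * b / k) (by positivity)).2.1
  have h3 : Real.exp (-(c * b / k)) ≤ 2 / (c * b / k) ^ 2 := by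
    rw [le_div_iff₀ (by positivity)]; linarith
  have hC := Cl_pos (2 * m)
  calc _ ≤ Cl (2 * m) * (k ^ (-(((2 * m : ℕ) : ℝ) + 3 / 2)) * (2 / (c * b / k) ^ 2)) := by gcongr
    _ = _ := by
      rw [Real.rpow_add hk, Real.rpow_two]
      field_simp

lemma main_pos {m : ℕ} (hm : 0 < m) {x : ℝ} (hx : 0 < x) (hxint : ∀ k : ℤ, x ≠ (k : ℝ)) :
    LHS m x = cc m x * BB m x := by
  have h1 := LHS_hasSum m hx
  have h2 := hh_double_summable hm hx
  rw [← h1.tsum_eq]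
  have e : ∀ b : ℕ+, (((√(b : ℝ))⁻¹ : ℝ) : ℂ) * GG m x b = cc m x *
      ∑' k : ℕ+, iteratedDeriv (2 * m) (hh (2 * Real.pi * b * x)) (k : ℂ) := by
    intro b
    rw [GG_eq m hx b.pos, zero_pow (by omega)]
    unfold cc KK; ring
  rw [tsum_congr e, tsum_mul_left]
  congr 1
  rw [← h2.tsum_comm (f := fun b k : ℕ+ => iteratedDeriv (2 * m) (hh (2 * Real.pi * b * x)) ((k : ℕ) : ℂ))]
  have hm' : (1 : ℝ) ≤ m := by exact_mod_cast hm
  have e2 : ∀ k : ℕ+, ∑' b : ℕ+, iteratedDeriv (2 * m) (hh (2 * Real.pi * b * x)) ((k : ℕ) : ℂ) =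
      (1 / (2 * Real.pi * x)) * (ff (-(1 / 2)) (2 * m) * (k : ℂ) ^ (-(2 * m + 1 / 2) : ℂ))
        - 1 / 2 * (ff (-(3 / 2)) (2 * m) * (k : ℂ) ^ (-(2 * m + 3 / 2) : ℂ))
        + ∑' j : ℕ+, iteratedDeriv (2 * m) (phi x j) (k : ℂ) := by
    intro k
    have := (Dsum hx (t := (k : ℕ)) (by exact_mod_cast k.pos) (2 * m)).tsum_eq
    simp only [Complex.ofReal_natCast] at this
    rw [this]
    congr 6 <;> push_cast <;> ring
  rw [tsum_congr e2]
  have z1 := zeta_pnat (s := 2 * m + 1 / 2) (by simp; linarith)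
  have z2 := zeta_pnat (s := 2 * m + 3 / 2) (by simp; linarith)
  have z3 := (phi_double_summable hx (2 * m)).prod.hasSum
  rw [phi_sum m hx hxint] at z3
  exact ((((z1.mul_left _).mul_left _).sub ((z2.mul_left _).mul_left _)).add z3).tsum_eq

lemma hasSum_succ {f : ℕ → ℂ} {a : ℂ} (h : HasSum (fun k : ℕ+ => f k) a) :
    HasSum (fun i : ℕ => f (i + 1)) a := by
  have := (Equiv.pnatEquivNat.symm.hasSum_iff (f := fun k : ℕ+ => f k)).2 h
  refine this.congr_fun fun i => ?_
  simp

end CC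

namespace CC
open Filter Topology Set MeasureTheory

noncomputable def rr (x : ℝ) (k : ℕ) : ℂ :=
  -(1 / 2) * (k : ℂ) ^ (-(3 / 2) : ℂ) + ∑' j : ℕ+, phi x j (k : ℂ)

lemma rr_hasSum {x : ℝ} (hx : 0 < x) (hxint : ∀ k : ℤ, x ≠ (k : ℝ)) :
    HasSum (fun i : ℕ => rr x (i + 1))
      (-(1 / 2) * riemannZeta (3 / 2) + (1 / (Real.pi * x)) * TT 0 x) := by
  have z2 := zeta_pnat (s := 3 / 2) (by norm_num)
  have z3 := (phi_double_summable hx (2 * 0)).prod.hasSum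
  rw [phi_sum 0 hx hxint] at z3
  simp only [mul_zero, iteratedDeriv_zero] at z3
  have e : ff (-(1 / 2)) 0 = 1 := by simp [ff]
  rw [e, mul_one] at z3
  exact hasSum_succ (f := rr x) ((z2.mul_left (-(1 / 2))).add z3)

lemma hh_partial {x : ℝ} (hx : 0 < x) (N k : ℕ) (hk : 0 < k) :
    ∑ i ∈ Finset.range N, hh (2 * Real.pi * (i + 1 : ℕ) * x) (k : ℂ) =
      ((1 / (2 * Real.pi * x)) * ((√(k : ℝ))⁻¹ : ℝ) + rr x k) *
        ((1 - Real.exp (-(2 * Real.pi * N * x / k)) : ℝ) : ℂ) := by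
  have hpi := Real.pi_pos
  have hk' : (0 : ℝ) < k := by exact_mod_cast hk
  set q : ℝ := Real.exp (-(2 * Real.pi * x / k)) with hq
  have hq1 : q < 1 := by
    rw [hq, Real.exp_lt_one_iff, neg_lt_zero]; positivity
  have hq0 : 0 < q := Real.exp_pos _
  have e : ∀ b : ℕ, hh (2 * Real.pi * b * x) (k : ℂ) = (((k : ℝ) ^ (-(3 / 2) : ℝ) : ℝ) : ℂ) * (q : ℂ) ^ b := by
    intro b
    have := hh_ofReal (2 * Real.pi * b * x) hk'
    rw [Complex.ofReal_natCast] at this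
    rw [this, ← Complex.ofReal_pow, ← Complex.ofReal_mul, hq, ← Real.exp_nat_mul]
    congr 3; ring
  have eN : Real.exp (-(2 * Real.pi * N * x / k)) = q ^ N := by
    rw [hq, ← Real.exp_nat_mul]; congr 1; ring
  have hg := hasSum_succ (f := fun b : ℕ => hh (2 * Real.pi * b * x) (k : ℂ)) (by
    have := Dsum hx hk' 0
    simp only [iteratedDeriv_zero] at this
    exact this)
  have hqc : (q : ℂ) ≠ 1 := by exact_mod_cast hq1.ne
  have hqc' : (1 - q : ℂ) ≠ 0 := sub_ne_zero.2 hqc.symm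
  have hg2 : HasSum (fun i : ℕ => hh (2 * Real.pi * (i + 1 : ℕ) * x) (k : ℂ))
      ((((k : ℝ) ^ (-(3 / 2) : ℝ) : ℝ) : ℂ) * q * (1 - q : ℂ)⁻¹) := by
    have := (hasSum_geometric_of_norm_lt_one (ξ := (q : ℂ))
      (by rwa [Complex.norm_real, Real.norm_of_nonneg hq0.le])).mul_left
        ((((k : ℝ) ^ (-(3 / 2) : ℝ) : ℝ) : ℂ) * q)
    refine this.congr_fun fun i => ?_
    rw [e]; ring
  have hgg := hg.unique hg2
  have e2 : (1 / (2 * Real.pi * x)) * (((√(k : ℝ))⁻¹ : ℝ) : ℂ) + rr x k =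
      (((k : ℝ) ^ (-(3 / 2) : ℝ) : ℝ) : ℂ) * q * (1 - q : ℂ)⁻¹ := by
    rw [← hgg]
    have e3 : (((√(k : ℝ))⁻¹ : ℝ) : ℂ) = (k : ℂ) ^ (-(1 / 2) : ℂ) := by
      rw [Real.sqrt_eq_rpow, ← Real.rpow_neg hk'.le, Complex.ofReal_cpow hk'.le]
      push_cast; rfl
    rw [e3]
    simp only [rr, ff, Finset.range_zero, Finset.prod_empty, Complex.ofReal_natCast, Nat.cast_zero,
      sub_zero, one_mul]
    ring
  rw [e2, eN]
  simp only [e, pow_succ]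
  rw [← Finset.mul_sum, ← Finset.sum_mul, geom_sum_eq hqc]
  have : (q - 1 : ℂ) ≠ 0 := sub_ne_zero.2 hqc
  push_cast
  field_simp
  ring

lemma hh_row_summable {x : ℝ} (hx : 0 < x) (b : ℕ) :
    Summable fun i : ℕ => hh (2 * Real.pi * b * x) ((i + 1 : ℕ) : ℂ) := by
  have hpi := Real.pi_pos
  refine Summable.of_norm_bounded (succ_rpow_summable (s := -(3 / 2)) (by norm_num)) fun i => ?_
  have hi : (0 : ℝ) < (i + 1 : ℕ) := by positivity
  have := hh_ofReal (2 * Real.pi * b * x) hi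
  rw [Complex.ofReal_natCast] at this
  rw [this, Complex.norm_real, Real.norm_of_nonneg (by positivity), ← Nat.cast_succ]
  exact mul_le_of_le_one_right (by positivity) (by rw [Real.exp_le_one_iff, neg_nonpos]; positivity)

lemma KK_partial {x : ℝ} (hx : 0 < x) (hxint : ∀ k : ℤ, x ≠ (k : ℝ)) (N : ℕ) :
    ∑ i ∈ Finset.range N, KK 0 x (i + 1) =
      (1 / (2 * Real.pi * x)) * ((∑' i : ℕ, (√((i : ℝ) + 1))⁻¹ *
          (1 - Real.exp (-(2 * Real.pi * N * x / (i + 1)))) : ℝ) : ℂ) +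
        ∑' i : ℕ, rr x (i + 1) * ((1 - Real.exp (-(2 * Real.pi * N * x / (i + 1))) : ℝ) : ℂ) := by
  have hpi := Real.pi_pos
  have e : ∀ b : ℕ, KK 0 x b = ∑' i : ℕ, hh (2 * Real.pi * b * x) ((i + 1 : ℕ) : ℂ) := by
    intro b
    unfold KK
    simp only [mul_zero, iteratedDeriv_zero]
    exact tsum_pnat_eq_tsum_succ (f := fun k : ℕ => hh (2 * Real.pi * b * x) (k : ℂ))
  rw [Finset.sum_congr rfl fun i _ => e (i + 1),
    ← Summable.tsum_finsetSum fun i _ => hh_row_summable hx (i + 1)]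
  rw [tsum_congr fun i => hh_partial hx N (i + 1) i.succ_pos]
  rw [Complex.ofReal_tsum, ← tsum_mul_left]
  have h1 : Summable fun i : ℕ => (1 / (2 * Real.pi * x) : ℂ) * (((√((i : ℝ) + 1))⁻¹ *
          (1 - Real.exp (-(2 * Real.pi * N * x / (i + 1)))) : ℝ) : ℂ) :=
    (Complex.hasSum_ofReal.2 (pp_summable (M := 2 * Real.pi * N * x) (by positivity)).hasSum).summable.mul_left _
  have h2 : Summable fun i : ℕ => rr x (i + 1) *
      ((1 - Real.exp (-(2 * Real.pi * N * x / (i + 1))) : ℝ) : ℂ) := by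
    refine Summable.of_norm_bounded (rr_hasSum hx hxint).summable.norm fun i => ?_
    rw [norm_mul, Complex.norm_real]
    refine mul_le_of_le_one_right (norm_nonneg _) ?_
    obtain ⟨-, -, -, -, h5, h6⟩ := we_le (w := 2 * Real.pi * N * x / ((i : ℝ) + 1)) (by positivity)
    rw [Real.norm_of_nonneg (by linarith)]; linarith
  rw [← h1.tsum_add h2]
  refine tsum_congr fun i => ?_
  push_cast; ring

lemma rr_tendsto {x : ℝ} (hx : 0 < x) (hxint : ∀ k : ℤ, x ≠ (k : ℝ)) :
    Tendsto (fun N : ℕ => ∑' i : ℕ, rr x (i + 1) *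
      ((1 - Real.exp (-(2 * Real.pi * N * x / (i + 1))) : ℝ) : ℂ)) atTop
      (𝓝 (-(1 / 2) * riemannZeta (3 / 2) + (1 / (Real.pi * x)) * TT 0 x)) := by
  have hpi := Real.pi_pos
  rw [← (rr_hasSum hx hxint).tsum_eq]
  have hM : Tendsto (fun N : ℕ => 2 * Real.pi * N * x) atTop atTop :=
    (tendsto_natCast_atTop_atTop.const_mul_atTop (by positivity)).atTop_mul_const hx
  refine tendsto_tsum_of_dominated_convergence (rr_hasSum hx hxint).summable.norm (fun i => ?_)
    (Eventually.of_forall fun N i => ?_)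
  · have h1 := ((exp_tendsto (t := (i : ℝ) + 1) (by positivity)).comp hM).const_sub 1
    rw [sub_zero] at h1
    have := ((Complex.continuous_ofReal.tendsto _).comp h1).const_mul (rr x (i + 1))
    simpa using this
  · rw [norm_mul, Complex.norm_real]
    refine mul_le_of_le_one_right (norm_nonneg _) ?_
    obtain ⟨-, -, -, -, h5, h6⟩ := we_le (w := 2 * Real.pi * N * x / ((i : ℝ) + 1)) (by positivity)
    rw [Real.norm_of_nonneg (by linarith)]; linarith

lemma main_zero {x : ℝ} (hx : 0 < x) (hxint : ∀ k : ℤ, x ≠ (k : ℝ)) :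
    LHS 0 x = cc 0 x * BB 0 x - 1 / 2 * riemannZeta (1 / 2) := by
  have hpi := Real.pi_pos
  have h1 := (hasSum_succ (f := fun b : ℕ => (((√(b : ℝ))⁻¹ : ℝ) : ℂ) * GG 0 x b)
    (LHS_hasSum 0 hx)).tendsto_sum_nat
  obtain ⟨z, hz, hE⟩ := lemE
  have hM : Tendsto (fun N : ℕ => 2 * Real.pi * N * x) atTop atTop :=
    (tendsto_natCast_atTop_atTop.const_mul_atTop (by positivity)).atTop_mul_const hx
  have hE2 := (Complex.continuous_ofReal.tendsto _).comp (hE.comp hM)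
  rw [hz] at hE2
  have hR := rr_tendsto hx hxint
  have hZ := zeta_half_limit
  have hlim := (((hE2.const_mul (1 / (2 * Real.pi * x) : ℂ)).add hR).const_mul ((√(2 * x) : ℝ) : ℂ)).sub hZ
    |>.const_mul (1 / 2 : ℂ)
  have hfin := tendsto_nhds_unique h1 (hlim.congr fun N => ?_)
  · rw [hfin]
    unfold cc BB
    simp only [ff, mul_zero, Finset.range_zero, Finset.prod_empty, Nat.cast_zero, zero_add, pow_zero]
    ring
  · simp only [Function.comp]
    rw [Finset.sum_congr rfl fun i _ => GG_eq 0 hx i.succ_pos]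
    rw [← Finset.mul_sum, Finset.sum_sub_distrib, ← Finset.mul_sum, KK_partial hx hxint]
    have e1 : √(2 * x) * ((1 / (2 * Real.pi * x)) * (2 * √(Real.pi * (2 * Real.pi * N * x)))) = 2 * √(N : ℝ) := by
      rw [show Real.pi * (2 * Real.pi * N * x) = Real.pi ^ 2 * (2 * x * N) by ring,
        Real.sqrt_mul (sq_nonneg Real.pi), Real.sqrt_sq hpi.le, Real.sqrt_mul (by positivity : 0 ≤ 2 * x) (N : ℝ)]
      have : √(2 * x) * √(2 * x) = 2 * x := Real.mul_self_sqrt (by positivity)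
      field_simp
      rw [sq, this]
    have e1c : ((√(2 * x) : ℝ) : ℂ) * ((1 / (2 * Real.pi * x)) *
        (2 * ((√(Real.pi * (2 * Real.pi * N * x)) : ℝ) : ℂ))) = 2 * ((√(N : ℝ) : ℝ) : ℂ) := by
      exact_mod_cast e1
    have e2 : ∑ i ∈ Finset.range N, (0 : ℂ) ^ (2 * 0) * (((√((i + 1 : ℕ) : ℝ))⁻¹ : ℝ) : ℂ) =
        ((∑ i ∈ Finset.range N, ((i : ℝ) + 1) ^ (-(1 / 2) : ℝ) : ℝ) : ℂ) := by
      rw [Complex.ofReal_sum]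
      refine Finset.sum_congr rfl fun i _ => ?_
      rw [Real.sqrt_eq_rpow, ← Real.rpow_neg (by positivity)]
      simp
    rw [e2]
    simp only [mul_zero, pow_zero, Complex.ofReal_sub]
    have e3 : ∀ r : ℝ, ((2 * r : ℝ) : ℂ) = 2 * (r : ℂ) := fun r => by push_cast; rfl
    rw [e3, e3]
    linear_combination (-(1 / 2) : ℂ) * e1c

end CC

namespace CC
open Filter Topology Set MeasureTheory

lemma main_all (m : ℕ) {x : ℝ} (hx : 0 < x) (hxint : ∀ k : ℤ, x ≠ (k : ℝ)) :
    LHS m x = cc m x * BB m x + riemannZeta (1 / 2) * riemannZeta (-2 * m) := by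
  rcases m with _ | m
  · rw [main_zero hx hxint]
    simp only [Nat.cast_zero, mul_zero, riemannZeta_zero]; ring
  · rw [main_pos m.succ_pos hx hxint]
    have := riemannZeta_neg_two_mul_nat_add_one m
    push_cast
    rw [this]; ring

lemma sqrt2c : ((√2 : ℝ) : ℂ) ^ 2 = 2 := by
  rw [← Complex.ofReal_pow, Real.sq_sqrt (by norm_num)]; norm_num

lemma cos_quarter (m : ℕ) : Complex.cos (Real.pi * (2 * m + 1 / 2 : ℂ) / 2) = (-1) ^ m * (√2 / 2 : ℝ) := by
  have e : (Real.pi * (2 * m + 1 / 2 : ℂ) / 2) = ((Real.pi / 4 + m * Real.pi : ℝ) : ℂ) := by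
    push_cast; ring
  rw [e, ← Complex.ofReal_cos, Real.cos_add_nat_mul_pi, Real.cos_pi_div_four]
  push_cast; ring

lemma cos_three_quarter (m : ℕ) :
    Complex.cos (Real.pi * (2 * m + 3 / 2 : ℂ) / 2) = -((-1) ^ m * (√2 / 2 : ℝ)) := by
  have e : (Real.pi * (2 * m + 3 / 2 : ℂ) / 2) = ((Real.pi - Real.pi / 4 + m * Real.pi : ℝ) : ℂ) := by
    push_cast; ring
  rw [e, ← Complex.ofReal_cos, Real.cos_add_nat_mul_pi, Real.cos_pi_sub, Real.cos_pi_div_four]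
  push_cast; ring

lemma twopi_pow (m : ℕ) (a : ℝ) :
    (2 * Real.pi : ℂ) ^ (-(2 * m + a) : ℂ) = (((2 * Real.pi) ^ (2 * m))⁻¹ : ℂ) * (((2 * Real.pi) ^ (-a) : ℝ) : ℂ) := by
  have hpi := Real.pi_pos
  have h : (0 : ℝ) < 2 * Real.pi := by positivity
  have : (2 * Real.pi : ℝ) ^ (-(2 * m + a) : ℝ) = ((2 * Real.pi) ^ (2 * m))⁻¹ * (2 * Real.pi) ^ (-a) := by
    rw [neg_add, Real.rpow_add h, Real.rpow_neg h.le, ← Real.rpow_natCast]; push_cast; rfl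
  have h2 := congrArg (fun r : ℝ => (r : ℂ)) this
  simp only [Complex.ofReal_mul] at h2
  rw [Complex.ofReal_cpow h.le] at h2
  push_cast at h2 ⊢
  exact h2

lemma nat_ne_half {s : ℝ} (hs : 0 < s) (n : ℕ) : (s : ℂ) ≠ -n := by
  intro h
  have : s = -(n : ℝ) := by exact_mod_cast h
  have : (0 : ℝ) ≤ n := by positivity
  linarith

lemma fe1 (m : ℕ) : riemannZeta (1 / 2 - 2 * m) =
    2 * (((2 * Real.pi) ^ (2 * m))⁻¹ : ℂ) * (((2 * Real.pi) ^ (-(1 / 2) : ℝ) : ℝ) : ℂ) *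
      ((Real.Gamma (2 * m + 1 / 2) : ℝ) : ℂ) * ((-1) ^ m * (√2 / 2 : ℝ)) * riemannZeta (2 * m + 1 / 2) := by
  have h := riemannZeta_one_sub (s := 2 * m + 1 / 2)
    (fun n => by
      have := nat_ne_half (s := 2 * m + 1 / 2) (by positivity) n
      push_cast at this; exact this)
    (by
      intro h
      have h2 : ((4 * m + 1 : ℕ) : ℂ) = ((2 : ℕ) : ℂ) := by
        push_cast; linear_combination 2 * h
      have h3 : 4 * m + 1 = 2 := Nat.cast_injective h2
      omega)
  have ht := twopi_pow m (1 / 2)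
  push_cast at ht
  rw [cos_quarter, ht] at h
  rw [show (1 / 2 - 2 * m : ℂ) = 1 - (2 * m + 1 / 2) by ring, h, ← Complex.Gamma_ofReal]
  push_cast
  ring

lemma fe2 (m : ℕ) : riemannZeta (-1 / 2 - 2 * m) =
    2 * (((2 * Real.pi) ^ (2 * m))⁻¹ : ℂ) * (((2 * Real.pi) ^ (-(3 / 2) : ℝ) : ℝ) : ℂ) *
      ((Real.Gamma (2 * m + 3 / 2) : ℝ) : ℂ) * -((-1) ^ m * (√2 / 2 : ℝ)) * riemannZeta (2 * m + 3 / 2) := by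
  have h := riemannZeta_one_sub (s := 2 * m + 3 / 2)
    (fun n => by
      have := nat_ne_half (s := 2 * m + 3 / 2) (by positivity) n
      push_cast at this; exact this)
    (by
      intro h
      have h2 : ((4 * m + 3 : ℕ) : ℂ) = ((2 : ℕ) : ℂ) := by
        push_cast; linear_combination 2 * h
      have h3 : 4 * m + 3 = 2 := Nat.cast_injective h2
      omega)
  have ht := twopi_pow m (3 / 2)
  push_cast at ht
  rw [cos_three_quarter, ht] at h
  rw [show (-1 / 2 - 2 * m : ℂ) = 1 - (2 * m + 3 / 2) by ring, h, ← Complex.Gamma_ofReal]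
  push_cast
  ring

lemma ff_three_half (m : ℕ) :
    ff (-(3 / 2)) (2 * m) = ((Real.Gamma (2 * m + 3 / 2) / (√Real.pi / 2) : ℝ) : ℂ) := by
  have := ff_gamma (3 / 2) (by norm_num) (2 * m)
  have g : Real.Gamma (3 / 2) = √Real.pi / 2 := by
    rw [show (3 / 2 : ℝ) = 1 / 2 + 1 by norm_num, Real.Gamma_add_one (by norm_num), Real.Gamma_one_half_eq]
    ring
  rw [(even_two_mul m).neg_one_pow, one_mul, g] at this
  rw [Complex.ofReal_div, eq_div_iff (by rw [Complex.ofReal_ne_zero]; have := Real.pi_pos; positivity)]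
  push_cast at this ⊢
  rw [this]; congr 2; ring

end CC

namespace CC
open Filter Topology Set MeasureTheory

lemma final_eq (m : ℕ) {x : ℝ} (hx : 0 < x) :
    cc m x * BB m x =
     riemannZeta (1 / 2 - 2 * m) / (2 * (Real.pi : ℂ) * (Real.sqrt (2 * x) : ℂ))
      + ((Real.pi * Real.sqrt (2 * x) : ℝ) : ℂ) * riemannZeta (-1 / 2 - 2 * m)
      + (-1 : ℂ) ^ m /
          ((Real.pi * Real.sqrt x * (2 * Real.pi) ^ (2 * (m : ℝ) + 1 / 2) : ℝ) : ℂ) *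
          ((Real.Gamma (2 * m + 1 / 2) : ℝ) : ℂ) * TT m x := by
  have hpi := Real.pi_pos
  have h2p : (0 : ℝ) < 2 * Real.pi := by positivity
  have r1 : (2 * Real.pi : ℝ) ^ (1 / 2 : ℝ) = √2 * √Real.pi := by
    rw [← Real.sqrt_eq_rpow, Real.sqrt_mul (by norm_num)]
  have r2 : (2 * Real.pi : ℝ) ^ (-(1 / 2) : ℝ) = (√2 * √Real.pi)⁻¹ := by
    rw [Real.rpow_neg h2p.le, r1]
  have r3 : (2 * Real.pi : ℝ) ^ (-(3 / 2) : ℝ) = (2 * Real.pi * (√2 * √Real.pi))⁻¹ := by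
    rw [Real.rpow_neg h2p.le, show (3 / 2 : ℝ) = 1 + 1 / 2 by norm_num, Real.rpow_add h2p, Real.rpow_one, r1]
  have r4 : (2 * Real.pi : ℝ) ^ (2 * (m : ℝ) + 1 / 2) = (2 * Real.pi) ^ (2 * m) * (√2 * √Real.pi) := by
    rw [Real.rpow_add h2p, r1, ← Real.rpow_natCast]; push_cast; rfl
  have r5 : √(2 * x) = √2 * √x := Real.sqrt_mul (by norm_num) x
  rw [fe1, fe2, r2, r3, r4]
  unfold cc BB
  rw [ff_half, ff_three_half, r5]
  have q1 : ((√2 : ℝ) : ℂ) ^ 2 = 2 := sqrt2c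
  have q2 : ((√Real.pi : ℝ) : ℂ) ^ 2 = Real.pi := by
    rw [← Complex.ofReal_pow, Real.sq_sqrt hpi.le]
  have q3 : ((√x : ℝ) : ℂ) ^ 2 = x := by
    rw [← Complex.ofReal_pow, Real.sq_sqrt hx.le]
  have n1 : ((√2 : ℝ) : ℂ) ≠ 0 := by rw [Complex.ofReal_ne_zero]; positivity
  have n2 : ((√Real.pi : ℝ) : ℂ) ≠ 0 := by rw [Complex.ofReal_ne_zero]; positivity
  have n3 : ((√x : ℝ) : ℂ) ≠ 0 := by rw [Complex.ofReal_ne_zero]; positivity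
  have n4 : (Real.pi : ℂ) ≠ 0 := by rw [Complex.ofReal_ne_zero]; positivity
  have n5 : ((2 * Real.pi : ℂ) ^ (2 * m)) ≠ 0 := pow_ne_zero _ (by simp [n4])
  push_cast
  rw [← q3]
  generalize ((√2 : ℝ) : ℂ) = a at *
  generalize ((√x : ℝ) : ℂ) = b at *
  generalize ((√Real.pi : ℝ) : ℂ) = c at *
  generalize ((2 * Real.pi : ℂ) ^ (2 * m)) = d at *
  generalize ((-1 : ℂ) ^ m) = e at *
  generalize (Real.pi : ℂ) = p at *
  generalize riemannZeta _ = z1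
  generalize riemannZeta _ = z2
  generalize TT m x = t
  generalize ((Real.Gamma _ : ℝ) : ℂ) = g1
  generalize ((Real.Gamma _ : ℝ) : ℂ) = g2
  have A : e / (2 * d) * (a * b) * (1 / (2 * p * b ^ 2) * (g1 / c * z1)) =
      2 * d⁻¹ * (a * c)⁻¹ * g1 * (e * (a / 2)) * z1 / (2 * p * (a * b)) := by
    field_simp
    linear_combination e * g1 * z1 * q1
  have B : e / (2 * d) * (a * b) * (1 / 2 * (g2 / (c / 2) * z2)) =
      - (p * (a * b) * (2 * d⁻¹ * (2 * p * (a * c))⁻¹ * g2 * -(e * (a / 2)) * z2)) := by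
    field_simp
  have C : e / (2 * d) * (a * b) * (1 / (p * b ^ 2) * (g1 / c) * t) =
      e / (p * b * (d * (a * c))) * g1 * t := by
    field_simp
    linear_combination e * g1 * t * q1
  linear_combination A - B + C

end CC

open Complex Finset
open scoped Real BigOperators Classical

theorem coalescence_cos (m : ℕ) (x : ℝ) (hx : 0 < x) (hxint : ∀ k : ℤ, x ≠ (k : ℝ)) :
    (∑' n : ℕ, ((rsigma (2 * m + 1 / 2) (n + 1) / Real.sqrt ((n : ℝ) + 1) *
        Real.exp (-(2 * π * Real.sqrt (2 * ((n : ℝ) + 1) * x))) *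
        Real.cos (2 * π * Real.sqrt (2 * ((n : ℝ) + 1) * x)) : ℝ) : ℂ))
    = riemannZeta (1 / 2 - 2 * m) / (2 * (π : ℂ) * (Real.sqrt (2 * x) : ℂ))
      + ((π * Real.sqrt (2 * x) : ℝ) : ℂ) * riemannZeta (-1 / 2 - 2 * m)
      + riemannZeta (1 / 2) * riemannZeta (-2 * m)
      + (-1 : ℂ) ^ m /
          ((π * Real.sqrt x * (2 * π) ^ (2 * (m : ℝ) + 1 / 2) : ℝ) : ℂ) *
          ((Real.Gamma (2 * m + 1 / 2) : ℝ) : ℂ) *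
        ∑' n : ℕ,
          ((rsigma (2 * m + 1 / 2) (n + 1) : ℝ) : ℂ) *
            ((((n : ℝ) + 1) ^ (-(2 * (m : ℝ)) - 1 / 2) : ℝ) : ℂ) * Wm m (n + 1) x := by
  have h := CC.main_all m hx hxint
  rw [CC.final_eq m hx] at h
  unfold CC.LHS CC.TT at h
  rw [h]
  ring
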